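/- arXiv:2202.06949 — 4 statements merged into one kernel-verified Lean document; each statement's English description precedes it below -/
import Mathlib

section
/- Let α = l/k (in lowest terms, k ≥ 1, 0 ≤ l ≤ k) be an element of Q*. Then for every positive integer n and every collection of n step-function probability measures μ_1, ..., μ_n on [0,1], there exist a natural number m with m ≤ 2·(k−1)·n/k (as real numbers) and a set A ⊆ [0,1] achievable with m cuts such that μ_i(A) = l/k for every i ∈ {1, ..., n}. -/
/-!
The heart of the matter is the splitting theorem for a prime `p` (`necklace`): for `n` continuous
measures on `[0,1]`, at most `d = (p - 1) n` cuts allow the pieces to be coloured by `ZMod p` so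
that every colour class has measure `1/p` for every measure. Given it, the theorem follows by
induction on `Q*`. Suppose `D` uses `m` cuts and has measure `q` for every `μ i`. Splitting the
restricted measures `μ i |_D` gives a colouring with `(p - 1) n` cuts; the sets `D ∩ {colour = a}`,
`a : ZMod p`, all have measure `q / p`. A cut of `D` is an endpoint of only one of them and a cut
between colours of at most two, so together they use at most `m + 2 (p - 1) n` cuts, and one of them
uses at most `(m + 2 (p - 1) n) / p` (`merge`, `refine_step`). With `m ≤ 2 (k - 1) n / k` this is at
most `2 (k p - 1) n / (k p)`, and `k p` is the denominator of `q / p` because `p` does not divide the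
numerator. Passing from `q / p` to `1 - q / p` is taking complements, which keeps cuts and
denominator.

For the splitting theorem, the coloured partitions with `d` cuts form the `d`-dimensional complex
`(ZMod p) * ... * (ZMod p)` (a join of `d + 1` copies), on which `ZMod p` acts freely by rotating
colours. The deviation of the colour classes from `1/p` is an equivariant map `Φ` to the space of
`n × p` real matrices with zero row sums, and a zero of `Φ` is wanted (`exists_zero`). If `Φ` had no
zero, then each small simplex could be labelled by the set of pairs (measure, colour) at which `Φ` is
maximal at some vertex. A full row never appears in a label set (`labels_missing`), so label sets
have between `1` and `d` elements and are not rotation invariant. Recording the size of the label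
set together with a position in its orbit under rotation gives an equivariant map from a fine
subdivision to a complex with only `d` levels.

That such a map is impossible (`core`) is proved with chains modulo `p`. Writing `g` for a generator,
the join carries chains `x_0, x_1, ..., x_{d+1}` with `x_0` the empty simplex and
`∂ x_{k+1} = T_k x_k`, where `T_0 = 1` and `T_k` alternates between the norm `1 + g + ... + g^(p-1)`
and the difference `1 - g` (`res`, `bd_res`). Such a ladder survives subdivision and equivariant maps.
By counting levels, its image at step `d + 1` consists of degenerate simplices, but an inductively
constructed functional, vanishing on degenerate simplices, takes the value `1` on `T_{d+1}` of that
image (`exists_functional`, `not_mem_dup`).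
-/

open MeasureTheory
open scoped ENNReal

/-- `Q*` is the smallest subset of `ℚ` containing `0` and `1` and such that whenever
`q = l/k` (lowest terms) belongs to `Q*` and `p` is a prime not dividing the numerator
`l`, both `l/(k·p) = q/p` and `1 − q/p` belong to `Q*`. -/
inductive QStar : ℚ → Prop
  | zero : QStar 0
  | one : QStar 1
  | div (q : ℚ) (p : ℕ) (hp : p.Prime) (hq : QStar q) (hnd : ¬ (p : ℤ) ∣ q.num) :
      QStar (q / (p : ℚ))
  | one_sub_div (q : ℚ) (p : ℕ) (hp : p.Prime) (hq : QStar q) (hnd : ¬ (p : ℤ) ∣ q.num) :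
      QStar (1 - q / (p : ℚ))

/-- A step-function probability measure on `[0,1]`: a Borel probability measure on `ℝ`
that is absolutely continuous w.r.t. Lebesgue measure with a piecewise constant density
supported in `[0,1]`. -/
def IsStepMeasure (μ : Measure ℝ) : Prop :=
  IsProbabilityMeasure μ ∧
  ∃ (n : ℕ) (a b : Fin n → ℝ) (c : Fin n → ℝ≥0∞),
    (∀ i, 0 ≤ a i ∧ b i ≤ 1) ∧
    μ = volume.withDensity
      (fun x => ∑ i, Set.indicator (Set.Ico (a i) (b i)) (fun _ => c i) x)

/-- `A ⊆ [0,1]` is achievable with `m` cuts: there are points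
`0 = y_0 ≤ y_1 ≤ ... ≤ y_m ≤ y_{m+1} = 1` such that `A` is the union of some
subcollection of the `m+1` closed intervals determined by these points. -/
def AchievableWithCuts (m : ℕ) (A : Set ℝ) : Prop :=
  ∃ y : Fin (m + 2) → ℝ, Monotone y ∧ y 0 = 0 ∧ y (Fin.last (m + 1)) = 1 ∧
    ∃ S : Finset (Fin (m + 1)), A = ⋃ i ∈ S, Set.Icc (y i.castSucc) (y i.succ)

namespace ICD

/-! ### Ordered simplicial chains -/

section Chains

open Finsupp

variable {R : Type*} [CommRing R] {X Y : Type*}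

/-- Chains of ordered simplices with vertices in `X`: a simplex is a list of vertices, repetitions
allowed. The empty list is the augmentation simplex, so `l.length` is the dimension plus one. -/
abbrev Ch (R : Type*) [CommRing R] (X : Type*) := List X →₀ R

/-- The cone over a chain with new first vertex `a`. -/
noncomputable def cone (R : Type*) [CommRing R] {X : Type*} (a : X) : Ch R X →ₗ[R] Ch R X :=
  lmapDomain R R (List.cons a)

/-- The chain map induced by a map of vertices. -/
noncomputable def push (R : Type*) [CommRing R] {X Y : Type*} (f : X → Y) :
    Ch R X →ₗ[R] Ch R Y :=
  lmapDomain R R (List.map f)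

/-- The augmented boundary of one simplex, by recursion on the first vertex:
`∂ (a * l) = l - a * ∂ l`. -/
noncomputable def bdL (R : Type*) [CommRing R] {X : Type*} : List X → Ch R X
  | [] => 0
  | a :: l => single l 1 - cone R a (bdL R l)

/-- The augmented simplicial boundary. -/
noncomputable def bd (R : Type*) [CommRing R] {X : Type*} : Ch R X →ₗ[R] Ch R X :=
  linearCombination R (bdL R)

@[simp] lemma cone_single (a : X) (l : List X) (r : R) :
    cone R a (single l r) = single (a :: l) r := by
  simp [cone]

@[simp] lemma push_single (f : X → Y) (l : List X) (r : R) :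
    push R f (single l r) = single (l.map f) r := by
  simp [push]

@[simp] lemma bd_nil : bd R (single ([] : List X) (1 : R)) = 0 := by
  simp [bd, bdL]

@[simp] lemma bd_cons (a : X) (l : List X) :
    bd R (single (a :: l) (1 : R)) = single l 1 - cone R a (bd R (single l 1)) := by
  simp [bd, bdL]

/-- Two linear maps on chains agree once they agree on single lists. -/
lemma ch_ext {M : Type*} [AddCommGroup M] [Module R M] {f g : Ch R X →ₗ[R] M}
    (h : ∀ l, f (single l 1) = g (single l 1)) (z : Ch R X) : f z = g z := by
  have : f = g := by
    refine Finsupp.lhom_ext' fun l => LinearMap.ext_ring ?_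
    simpa using h l
  rw [this]

lemma bd_cone (a : X) (z : Ch R X) : bd R (cone R a z) = z - cone R a (bd R z) :=
  ch_ext (f := bd R ∘ₗ cone R a) (g := LinearMap.id - cone R a ∘ₗ bd R) (fun l => by simp) z

lemma bd_bd (z : Ch R X) : bd R (bd R z) = 0 := by
  refine ch_ext (f := bd R ∘ₗ bd R) (g := 0) (fun l => ?_) z
  induction l with
  | nil => simp
  | cons a l ih =>
    simp only [LinearMap.comp_apply, LinearMap.zero_apply] at ih
    simp [bd_cone, ih]

lemma push_cone (f : X → Y) (a : X) (z : Ch R X) :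
    push R f (cone R a z) = cone R (f a) (push R f z) :=
  ch_ext (f := push R f ∘ₗ cone R a) (g := cone R (f a) ∘ₗ push R f) (fun l => by simp) z

lemma bd_push (f : X → Y) (z : Ch R X) : bd R (push R f z) = push R f (bd R z) := by
  refine ch_ext (f := bd R ∘ₗ push R f) (g := push R f ∘ₗ bd R) (fun l => ?_) z
  induction l with
  | nil => simp
  | cons a l ih =>
    simp only [LinearMap.comp_apply, push_single] at ih
    simp [push_cone, ih]

/-- The subdivision operator on simplices with `k` vertices, with `b t` in the role of the barycentre
of `t`: a simplex is sent to the cone from `b t` over the subdivision of its boundary. For `b = bary`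
this is barycentric subdivision; an arbitrary labelling `b` of simplices gives barycentric subdivision
followed by the vertex map that `b` induces. -/
noncomputable def sub (R : Type*) [CommRing R] {X Y : Type*} (b : List X → Y) :
    ℕ → (Ch R X →ₗ[R] Ch R Y)
  | 0 => linearCombination R (fun t : List X => if t.length = 0 then single [] 1 else 0)
  | k + 1 => linearCombination R (fun t => cone R (b t) (sub R b k (bd R (single t 1))))

lemma sub_zero_single (b : List X → Y) (t : List X) :
    sub R b 0 (single t 1) = if t.length = 0 then single [] 1 else 0 := by
  simp [sub]

lemma sub_succ_single (b : List X → Y) (k : ℕ) (t : List X) :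
    sub R b (k + 1) (single t 1) = cone R (b t) (sub R b k (bd R (single t 1))) := by
  simp [sub]

/-- Subdivision is a chain map, for every choice of markers `b`. -/
lemma bd_sub (b : List X → Y) (k : ℕ) (z : Ch R X) :
    bd R (sub R b (k + 1) z) = sub R b k (bd R z) := by
  induction k generalizing z with
  | zero =>
    refine ch_ext (f := bd R ∘ₗ sub R b 1) (g := sub R b 0 ∘ₗ bd R) (fun t => ?_) z
    have h : ∀ w : Ch R X, bd R (sub R b 0 w) = 0 :=
      ch_ext (f := bd R ∘ₗ sub R b 0) (g := 0) (fun t => by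
        simp only [LinearMap.comp_apply, sub_zero_single]
        split_ifs <;> simp)
    simp [sub_succ_single, bd_cone, h]
  | succ k ih =>
    refine ch_ext (f := bd R ∘ₗ sub R b (k + 2)) (g := sub R b (k + 1) ∘ₗ bd R) (fun t => ?_) z
    simp only [LinearMap.comp_apply]
    rw [sub_succ_single, bd_cone, ih, bd_bd]
    simp

/-- The chains supported on simplices satisfying `P`. -/
def On (R : Type*) [CommRing R] {X : Type*} (P : List X → Prop) : Submodule R (Ch R X) :=
  supported R R {l | P l}

lemma single_mem_On {P : List X → Prop} {l : List X} (h : P l) (r : R) :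
    single l r ∈ On R P :=
  Finsupp.single_mem_supported R r h

lemma map_On {M : Type*} [AddCommGroup M] [Module R M] {P : List X → Prop}
    (f : Ch R X →ₗ[R] M) (S : Submodule R M)
    (h : ∀ l, P l → f (single l 1) ∈ S) {z : Ch R X} (hz : z ∈ On R P) : f z ∈ S := by
  have h2 : On R P ≤ S.comap f := by
    rw [On, supported_eq_span_single, Submodule.span_le]
    rintro _ ⟨l, hl, rfl⟩
    exact h l hl
  exact h2 hz

lemma eq_On {M : Type*} [AddCommGroup M] [Module R M] {P : List X → Prop}
    (f g : Ch R X →ₗ[R] M) (h : ∀ l, P l → f (single l 1) = g (single l 1))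
    {z : Ch R X} (hz : z ∈ On R P) : f z = g z := by
  have := map_On (f - g) ⊥ (fun l hl => by simp [h l hl]) hz
  simpa [sub_eq_zero] using this

lemma On_mono {P Q : List X → Prop} (h : ∀ l, P l → Q l) : On R P ≤ On R Q :=
  Finsupp.supported_mono h

lemma cone_mem_On {P Q : List X → Prop} (a : X) (h : ∀ l, P l → Q (a :: l)) {z : Ch R X}
    (hz : z ∈ On R P) : cone R a z ∈ On R Q :=
  map_On _ _ (fun l hl => by simpa using single_mem_On (h l hl) (1 : R)) hz

/-- The boundary of a list is carried by its sublists that are shorter by one entry. -/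
lemma bd_single_mem (t : List X) :
    bd R (single t 1) ∈ On R (fun l => l.length + 1 = t.length ∧ l.Sublist t) := by
  induction t with
  | nil => simp
  | cons a t ih =>
    rw [bd_cons]
    refine Submodule.sub_mem _ (single_mem_On (by simp) _) ?_
    exact cone_mem_On a (fun l hl => ⟨by simp [hl.1], hl.2.cons_cons a⟩) ih

/-- Subdivision commutes with `g` if the markers `b` are equivariant on the simplices considered. -/
lemma sub_push (b : List X → Y) (g : X → X) (g' : Y → Y) (P : List X → Prop)
    (hP : ∀ l l', l.Sublist l' → P l' → P l)
    (hb : ∀ t, t ≠ [] → P t → b (t.map g) = g' (b t)) (k : ℕ) {z : Ch R X} (hz : z ∈ On R P) :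
    sub R b k (push R g z) = push R g' (sub R b k z) := by
  induction k generalizing z with
  | zero =>
    refine eq_On (sub R b 0 ∘ₗ push R g) (push R g' ∘ₗ sub R b 0) (fun t _ => ?_) hz
    simp only [LinearMap.comp_apply, push_single, sub_zero_single, List.length_map]
    split_ifs <;> simp
  | succ k ih =>
    refine eq_On (sub R b (k + 1) ∘ₗ push R g) (push R g' ∘ₗ sub R b (k + 1)) (fun t ht => ?_) hz
    have h1 : bd R (single t (1 : R)) ∈ On R P :=
      On_mono (fun l hl => hP l t hl.2 ht) (bd_single_mem t)
    simp only [LinearMap.comp_apply, push_single]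
    rw [sub_succ_single, sub_succ_single, push_cone, ← push_single, bd_push, ih h1]
    rcases eq_or_ne t [] with rfl | h0
    · simp
    · rw [hb t h0 ht]

end Chains

/-! ### Ladders of chains under a cyclic action -/

section Algebra

open Finsupp

variable {p : ℕ}

/-- The alternating operators of the standard resolution of the cyclic group of order `p`:
`T 0 = 1`, the norm `1 + g + ... + g ^ (p - 1)` in odd degrees and the difference `1 - g` in positive
even degrees. -/
noncomputable def T (p : ℕ) {X : Type*} (g : X → X) (k : ℕ) : Module.End (ZMod p) (Ch (ZMod p) X) :=
  if k = 0 then 1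
  else if Odd k then ∑ m ∈ Finset.range p, (push (ZMod p) g : Module.End _ _) ^ m
  else 1 - push (ZMod p) g

lemma push_pow_single {R X : Type*} [CommRing R] (g : X → X) (m : ℕ) (l : List X) (r : R) :
    ((push R g : Module.End R (Ch R X)) ^ m) (single l r) = single (l.map (g^[m])) r := by
  induction m with
  | zero => simp
  | succ m ih =>
    rw [pow_succ', Module.End.mul_apply, ih, push_single, List.map_map, Function.iterate_succ']

lemma push_pow_eq_one {R X : Type*} [CommRing R] (g : X → X) (m : ℕ) (h : g^[m] = id) :
    (push R g : Module.End R (Ch R X)) ^ m = 1 := by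
  ext1 l
  refine LinearMap.ext_ring ?_
  simp [push_pow_single, h]

/-- `T k` commutes with everything that commutes with the generator. -/
lemma T_comm {X Y : Type*} (g : X → X) (g' : Y → Y) (S : Submodule (ZMod p) (Ch (ZMod p) X))
    (hS : ∀ z ∈ S, push _ g z ∈ S)
    (f : Ch (ZMod p) X →ₗ[ZMod p] Ch (ZMod p) Y)
    (h : ∀ z ∈ S, f (push _ g z) = push _ g' (f z)) (k : ℕ) {z : Ch (ZMod p) X} (hz : z ∈ S) :
    f (T p g k z) = T p g' k (f z) := by
  have hm : ∀ m : ℕ, ((push (ZMod p) g : Module.End _ _) ^ m) z ∈ S ∧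
      f (((push (ZMod p) g : Module.End _ _) ^ m) z)
        = ((push (ZMod p) g' : Module.End _ _) ^ m) (f z) := by
    intro m
    induction m with
    | zero => simpa using hz
    | succ m ih =>
      rw [pow_succ', Module.End.mul_apply, pow_succ', Module.End.mul_apply]
      exact ⟨hS _ ih.1, by rw [h _ ih.1, ih.2]⟩
  unfold T
  split_ifs
  · simp
  · simp only [LinearMap.sum_apply, map_sum]
    exact Finset.sum_congr rfl fun m _ => (hm m).2
  · simp [h z hz]

lemma T_mem {X : Type*} (g : X → X) (S : Submodule (ZMod p) (Ch (ZMod p) X))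
    (hS : ∀ z ∈ S, push _ g z ∈ S) (k : ℕ) {z : Ch (ZMod p) X} (hz : z ∈ S) :
    T p g k z ∈ S := by
  have hm : ∀ m : ℕ, ((push (ZMod p) g : Module.End _ _) ^ m) z ∈ S := by
    intro m
    induction m with
    | zero => simpa using hz
    | succ m ih =>
      rw [pow_succ', Module.End.mul_apply]
      exact hS _ ih
  unfold T
  split_ifs
  · simpa
  · simp only [LinearMap.sum_apply]
    exact Submodule.sum_mem _ fun m _ => hm m
  · simpa using Submodule.sub_mem _ hz (hS z hz)

lemma T_bd {X : Type*} (g : X → X) (k : ℕ) (z : Ch (ZMod p) X) :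
    bd _ (T p g k z) = T p g k (bd _ z) :=
  T_comm g g ⊤ (by simp) (bd _) (fun z _ => bd_push g z) k (by simp)

/-- Consecutive operators `T` compose to `1 - g ^ p = 0`. -/
lemma T_T {X : Type*} (g : X → X) (hg : g^[p] = id) (k : ℕ) (hk : k ≠ 0) (z : Ch (ZMod p) X) :
    T p g (k + 1) (T p g k z) = 0 := by
  have h1 := push_pow_eq_one (R := ZMod p) g p hg
  rw [← Module.End.mul_apply]
  unfold T
  rw [if_neg (Nat.succ_ne_zero k), if_neg hk]
  by_cases ho : Odd k
  · have : ¬ Odd (k + 1) := by simpa [Nat.odd_add_one] using ho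
    rw [if_neg this, if_pos ho]
    have h2 := mul_neg_geom_sum (push (ZMod p) g : Module.End (ZMod p) (Ch (ZMod p) X)) p
    rw [h1, sub_self] at h2
    exact LinearMap.congr_fun h2 z
  · have : Odd (k + 1) := by simpa [Nat.odd_add_one] using ho
    rw [if_pos this, if_neg ho]
    have h2 := geom_sum_mul_neg (push (ZMod p) g : Module.End (ZMod p) (Ch (ZMod p) X)) p
    rw [h1, sub_self] at h2
    exact LinearMap.congr_fun h2 z

/-- `T 1` (the norm) kills the empty list in characteristic `p`. -/
lemma T_one_nil {X : Type*} (g : X → X) :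
    T p g 1 (single [] 1) = 0 := by
  simp [T, push_pow_single]

/-- The ladder of chains `x 0 = []`, `x (k + 1) = v k * T k (x k)`. -/
noncomputable def res {X : Type*} (g : X → X) (v : ℕ → X) : ℕ → Ch (ZMod p) X
  | 0 => single [] 1
  | k + 1 => cone _ (v k) (T p g k (res g v k))

/-- The cones defining `res` solve `∂ x (k + 1) = T k (x k)`. -/
lemma bd_res {X : Type*} (g : X → X) (hg : g^[p] = id) (v : ℕ → X) (k : ℕ) :
    bd _ (res g v (k + 1)) = T p g k (res (p := p) g v k) := by
  induction k with
  | zero => simp [res, T]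
  | succ k ih =>
    rw [res, bd_cone, T_bd, ih]
    rcases eq_or_ne k 0 with rfl | hk
    · have : T p g 0 (res (p := p) g v 0) = single [] 1 := by simp [T, res]
      rw [this, T_one_nil]
      simp
    · rw [T_T g hg k hk]
      simp

/-- Degenerate simplices: two consecutive vertices coincide. -/
def Dup {Y : Type*} (l : List Y) : Prop := ¬ l.IsChain (· ≠ ·)

lemma dup_cons {Y : Type*} (a : Y) {l : List Y} (h : Dup l) : Dup (a :: l) :=
  fun h2 => h h2.tail

lemma dup_cons_cons {Y : Type*} (a : Y) (l : List Y) : Dup (a :: a :: l) :=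
  fun h2 => by simp at h2

lemma dup_map {Y : Type*} {g : Y → Y} {l : List Y} (h : Dup l) : Dup (l.map g) := by
  unfold Dup at *
  contrapose! h
  rw [List.isChain_map] at h
  exact h.imp fun a b hab e => hab (by rw [e])

/-- Degenerate simplices span a subcomplex: the two faces that need not be degenerate cancel. -/
lemma bd_dup {R Y : Type*} [CommRing R] {l : List Y} (h : Dup l) :
    bd R (single l 1) ∈ On R (Dup (Y := Y)) := by
  induction l with
  | nil => simp
  | cons a l ih =>
    rcases l with _ | ⟨b, l⟩
    · exact absurd h (by simp [Dup])
    · by_cases hl : Dup (b :: l)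
      · rw [bd_cons]
        exact Submodule.sub_mem _ (single_mem_On hl _)
          (cone_mem_On a (fun _ => dup_cons a) (ih hl))
      · have hab : a = b := by
          by_contra hne
          refine h ?_
          unfold Dup at hl
          push Not at hl
          rw [List.isChain_cons_cons]
          exact ⟨hne, hl⟩
        subst hab
        rw [bd_cons, bd_cons]
        simp only [map_sub, cone_single, sub_sub_cancel]
        have : bd R (single l (1 : R)) ∈ On R (fun _ => True) := by
          rw [On]; simp
        refine map_On (cone R a ∘ₗ cone R a) _ (fun l' _ => ?_) this
        simpa using single_mem_On (dup_cons_cons a l') (1 : R)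

/-- The vertices of the target complex: a level together with an element of `ZMod p`. -/
abbrev Tgt (p : ℕ) := ℕ × ZMod p

/-- Translation of the `ZMod p`-coordinate, a free action on `Tgt p`. -/
def sh (a : ZMod p) (y : Tgt p) : Tgt p := (y.1, y.2 + a)

lemma sh_iterate (m : ℕ) : (sh (1 : ZMod p))^[m] = sh (m : ZMod p) := by
  induction m with
  | zero => funext y; simp [sh]
  | succ m ih =>
    rw [Function.iterate_succ', ih]
    funext y
    simp [sh, add_assoc]

lemma sh_comp (a b : ZMod p) : sh a ∘ sh b = sh (a + b) := by
  funext y; simp [sh, add_assoc, add_comm a b]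

lemma sh_zero : sh (0 : ZMod p) = id := by
  funext y; simp [sh]

/-- A functional that is invariant under the free action factors through the norm: keep its values on
the simplices whose first vertex has `ZMod p`-coordinate `0`. -/
lemma exists_norm_section [Fact p.Prime] (u : Ch (ZMod p) (Tgt p) →ₗ[ZMod p] ZMod p)
    (hd : ∀ l : List (Tgt p), Dup l → u (single l 1) = 0) (hn : u (single [] 1) = 0)
    (hu : ∀ l, u (single (l.map (sh 1)) 1) = u (single l 1)) :
    ∃ ψ : Ch (ZMod p) (Tgt p) →ₗ[ZMod p] ZMod p, (∀ l, Dup l → ψ (single l 1) = 0) ∧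
      ∀ z, ψ (T p (sh 1) 1 z) = u z := by
  classical
  let φ : List (Tgt p) → ZMod p := fun l => match l with
    | [] => 0
    | y :: l => if y.2 = 0 then u (single (y :: l) 1) else 0
  refine ⟨linearCombination _ φ, fun l hl => ?_, fun z => ?_⟩
  · rcases l with _ | ⟨y, l⟩
    · simp [φ]
    · simp [φ, hd _ hl]
  · refine ch_ext (f := linearCombination _ φ ∘ₗ T p (sh 1) 1) (g := u) (fun l => ?_) z
    have hu2 : ∀ m : ℕ, u (single (l.map (sh (m : ZMod p))) 1) = u (single l 1) := by
      intro m
      induction m with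
      | zero => simp [sh_zero]
      | succ m ih =>
        rw [← ih, ← hu (l.map (sh (m : ZMod p))), List.map_map, sh_comp]
        simp [add_comm]
    simp only [T, LinearMap.comp_apply, one_ne_zero, if_false, odd_one, if_true,
      LinearMap.sum_apply, push_pow_single, map_sum, linearCombination_single, one_smul,
      sh_iterate]
    rcases l with _ | ⟨y, l⟩
    · simp [φ, hn]
    · have : ∀ m : ℕ, φ (List.map (sh (m : ZMod p)) (y :: l))
          = if y.2 + m = 0 then u (single (y :: l) 1) else 0 := by
        intro m
        rw [← hu2 m]
        rfl
      simp only [this]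
      have hp : 0 < p := (Fact.out : p.Prime).pos
      rw [Finset.sum_eq_single_of_mem (-y.2).val (Finset.mem_range.2 (ZMod.val_lt _))]
      · simp
      · intro m hm hne
        rw [if_neg]
        intro h0
        apply hne
        have : -y.2 = (m : ZMod p) := by rw [neg_eq_iff_add_eq_zero]; exact h0
        rw [this, ZMod.val_cast_of_lt (Finset.mem_range.1 hm)]

/-- A functional whose sum over every orbit vanishes factors through `1 - g`: take partial sums along
each orbit, starting where the first vertex has `ZMod p`-coordinate `0`. -/
lemma exists_diff_section [Fact p.Prime] (u : Ch (ZMod p) (Tgt p) →ₗ[ZMod p] ZMod p)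
    (hd : ∀ l : List (Tgt p), Dup l → u (single l 1) = 0) (hn : u (single [] 1) = 0)
    (hu : ∀ l : List (Tgt p), ∑ m ∈ Finset.range p, u (single (l.map (sh (m : ZMod p))) 1) = 0) :
    ∃ ψ : Ch (ZMod p) (Tgt p) →ₗ[ZMod p] ZMod p, (∀ l, Dup l → ψ (single l 1) = 0) ∧
      ∀ z, ψ (T p (sh 1) 2 z) = u z := by
  classical
  let φ : List (Tgt p) → ZMod p := fun l => match l with
    | [] => 0
    | y :: l => - ∑ m ∈ Finset.range y.2.val, u (single ((y :: l).map (sh ((m : ZMod p) - y.2))) 1)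
  refine ⟨linearCombination _ φ, fun l hl => ?_, fun z => ?_⟩
  · rcases l with _ | ⟨y, l⟩
    · simp [φ]
    · simp only [linearCombination_single, one_smul, φ, neg_eq_zero]
      exact Finset.sum_eq_zero fun m _ => hd _ (dup_map hl)
  · refine ch_ext (f := linearCombination _ φ ∘ₗ T p (sh 1) 2) (g := u) (fun l => ?_) z
    have h2 : ¬ Odd 2 := by decide
    simp only [T, LinearMap.comp_apply, if_false, OfNat.ofNat_ne_zero, h2, LinearMap.sub_apply,
      Module.End.one_apply, push_single, map_sub, linearCombination_single, one_smul]
    rcases l with _ | ⟨y, l⟩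
    · simp [φ, hn]
    · have h1 : φ (List.map (sh (1 : ZMod p)) (y :: l)) = - ∑ m ∈ Finset.range (y.2 + 1).val,
          u (single ((y :: l).map (sh ((m : ZMod p) - y.2))) 1) := by
        have : φ (List.map (sh (1 : ZMod p)) (y :: l)) = - ∑ m ∈ Finset.range (y.2 + 1).val,
          u (single (((y :: l).map (sh 1)).map (sh ((m : ZMod p) - (y.2 + 1)))) 1) := rfl
        rw [this]
        simp only [List.map_map, sh_comp]
        congr 1
        refine Finset.sum_congr rfl fun m _ => ?_
        congr 4
        ring_nf
      have h3 : φ (y :: l) = - ∑ m ∈ Finset.range y.2.val,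
          u (single ((y :: l).map (sh ((m : ZMod p) - y.2))) 1) := rfl
      have h4 : u (single ((y :: l).map (sh ((y.2.val : ZMod p) - y.2))) 1)
          = u (single (y :: l) 1) := by
        rw [ZMod.natCast_zmod_val, sub_self, sh_zero, List.map_id]
      have hlt := ZMod.val_lt y.2
      rw [h1, h3, ← h4]
      rcases Nat.lt_or_ge (y.2.val + 1) p with hc | hc
      · have : (y.2 + 1).val = y.2.val + 1 := by
          have e : y.2 + 1 = ((y.2.val + 1 : ℕ) : ZMod p) := by simp
          rw [e, ZMod.val_cast_of_lt hc]
        rw [this, Finset.sum_range_succ]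
        ring
      · have hc' : y.2.val + 1 = p := by omega
        have : (y.2 + 1).val = 0 := by
          have e : y.2 + 1 = ((y.2.val + 1 : ℕ) : ZMod p) := by simp
          rw [e, hc']; simp
        have h5 := hu ((y :: l).map (sh (- y.2)))
        simp only [List.map_map, sh_comp] at h5
        have h6 : Finset.range p = Finset.range (y.2.val + 1) := by rw [hc']
        rw [h6, Finset.sum_range_succ] at h5
        rw [this]
        simp only [← sub_eq_add_neg] at h5
        simp only [Finset.range_zero, Finset.sum_empty, neg_zero, sub_zero]
        rw [neg_eq_iff_add_eq_zero]
        exact h5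

lemma T_two_eq {X : Type*} (g : X → X) {k : ℕ} (h0 : k ≠ 0) (hk : ¬ Odd k) : T p g k = T p g 2 := by
  simp [T, h0, hk, show ¬ Odd 2 by decide]

lemma T_one_eq {X : Type*} (g : X → X) {k : ℕ} (hk : Odd k) : T p g k = T p g 1 := by
  have : k ≠ 0 := by rintro rfl; simp at hk
  simp [T, this, hk]

/-- Along any ladder `∂ y (j + 1) = T j (y j)` starting at the empty simplex, the top chain is detected
after applying `T` by a functional that ignores degenerate simplices. The functional at step `k + 1`
is a lift of `ψ ∘ ∂`, with `ψ` the functional at step `k`, through `T (k + 2)`. -/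
lemma exists_functional [Fact p.Prime] (y : ℕ → Ch (ZMod p) (Tgt p)) (h0 : y 0 = single [] 1)
    (k : ℕ)
    (hy : ∀ j ≤ k, bd _ (y (j + 1)) = T p (sh 1) j (y j)) :
    ∃ ψ : Ch (ZMod p) (Tgt p) →ₗ[ZMod p] ZMod p, (∀ l, Dup l → ψ (single l 1) = 0) ∧
      (∀ z, ψ (T p (sh 1) (k + 1) (bd _ z)) = 0) ∧ ψ (T p (sh 1) (k + 1) (y (k + 1))) = 1 := by
  have hdup : ∀ (ψ : Ch (ZMod p) (Tgt p) →ₗ[ZMod p] ZMod p),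
      (∀ l, Dup l → ψ (single l 1) = 0) → ∀ l, Dup l → (ψ ∘ₗ bd _) (single l 1) = 0 := by
    intro ψ h l hl
    have := map_On ψ ⊥ (fun l hl => by simp [h l hl]) (bd_dup (R := ZMod p) hl)
    simpa using this
  induction k with
  | zero =>
    let ε : Ch (ZMod p) (Tgt p) →ₗ[ZMod p] ZMod p := Finsupp.lapply []
    have hε : ∀ z, ε (push _ (sh 1) z) = ε z := by
      refine ch_ext (f := ε ∘ₗ push _ (sh 1)) (g := ε) (fun l => ?_)
      rcases l with _ | ⟨a, l⟩ <;> simp [ε]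
    obtain ⟨ψ, h1, h2⟩ := exists_norm_section (ε ∘ₗ bd _)
      (hdup ε (by
        rintro (_ | ⟨a, l⟩) hl
        · simp [Dup] at hl
        · simp [ε])) (by simp)
      (fun l => by
        rw [← push_single]
        simp only [LinearMap.comp_apply]
        rw [bd_push, hε])
    refine ⟨ψ, h1, fun z => ?_, ?_⟩
    · rw [zero_add, h2]; simp [bd_bd]
    · rw [zero_add, h2, LinearMap.comp_apply, hy 0 le_rfl, h0]
      simp [T, ε]
  | succ k ih =>
    obtain ⟨ψ, h1, h2, h3⟩ := ih fun j hj => hy j (by omega)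
    have key : ∃ ψ' : Ch (ZMod p) (Tgt p) →ₗ[ZMod p] ZMod p, (∀ l, Dup l → ψ' (single l 1) = 0) ∧
      ∀ z, ψ' (T p (sh 1) (k + 1 + 1) z) = (ψ ∘ₗ bd _) z := by
      have h4 : ∀ z, (ψ ∘ₗ bd _) (T p (sh 1) (k + 1) z) = 0 := by
        intro z
        rw [LinearMap.comp_apply, T_bd, h2]
      by_cases ho : Odd (k + 1)
      · have he : ¬ Odd (k + 1 + 1) := by rw [Nat.odd_add_one]; simpa using ho
        rw [T_two_eq _ (by omega) he]
        refine exists_diff_section _ (hdup ψ h1) (by simp) fun l => ?_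
        have := h4 (single l 1)
        rw [T_one_eq _ ho] at this
        simpa only [T, one_ne_zero, if_false, odd_one, if_true, LinearMap.sum_apply,
          push_pow_single, map_sum, sh_iterate] using this
      · have he : Odd (k + 1 + 1) := by rw [Nat.odd_add_one]; exact ho
        rw [T_one_eq _ he]
        refine exists_norm_section _ (hdup ψ h1) (by simp) fun l => ?_
        have := h4 (single l 1)
        rw [T, if_neg (by omega), if_neg ho] at this
        rw [LinearMap.sub_apply, map_sub, sub_eq_zero, Module.End.one_apply, push_single] at this
        exact this.symm
    obtain ⟨ψ', h5, h6⟩ := key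
    refine ⟨ψ', h5, fun z => ?_, ?_⟩
    · rw [h6]; simp [bd_bd]
    · rw [h6, LinearMap.comp_apply, hy (k + 1) le_rfl, h3]

/-- No chain of a ladder starting at the empty simplex is degenerate. -/
lemma not_mem_dup [Fact p.Prime] (y : ℕ → Ch (ZMod p) (Tgt p)) (h0 : y 0 = single [] 1)
    (k : ℕ)
    (hy : ∀ j ≤ k, bd _ (y (j + 1)) = T p (sh 1) j (y j)) :
    y (k + 1) ∉ On (ZMod p) (Dup (Y := Tgt p)) := by
  intro hmem
  obtain ⟨ψ, h1, -, h3⟩ := exists_functional y h0 k hy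
  have h4 : T p (sh 1) (k + 1) (y (k + 1)) ∈ On (ZMod p) (Dup (Y := Tgt p)) :=
    T_mem _ _ (fun z hz => map_On _ _ (fun l hl => by
      simpa using single_mem_On (dup_map hl) (1 : ZMod p)) hz) _ hmem
  have := map_On ψ ⊥ (fun l hl => by simp [h1 l hl]) h4
  rw [Submodule.mem_bot, h3] at this
  exact one_ne_zero this

end Algebra

/-! ### Barycentric subdivision -/

section Subdivision

open Finsupp

lemma On_and {R X : Type*} [CommRing R] {P Q : List X → Prop} {z : Ch R X}
    (h1 : z ∈ On R P) (h2 : z ∈ On R Q) : z ∈ On R (fun l => P l ∧ Q l) := by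
  rw [On, Finsupp.mem_supported] at *
  exact fun l hl => ⟨h1 hl, h2 hl⟩

lemma sub_length {R X Y : Type*} [CommRing R] (b : List X → Y) (k : ℕ) {z : Ch R X}
    (hz : z ∈ On R (fun l => l.length = k)) :
    sub R b k z ∈ On R (fun l => l.length = k) := by
  induction k generalizing z with
  | zero =>
    refine map_On _ _ (fun t ht => ?_) hz
    rw [sub_zero_single, if_pos ht]
    exact single_mem_On (by simp) _
  | succ k ih =>
    refine map_On _ _ (fun t ht => ?_) hz
    rw [sub_succ_single]
    exact cone_mem_On _ (fun l hl => by simp [hl])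
      (ih (On_mono (fun l hl => by omega) (bd_single_mem t)))

/-- Every entry produced by subdividing `t` is the marker of a nonempty sublist of `t`, and earlier
entries come from larger sublists. -/
lemma sub_pairwise {R X Y : Type*} [CommRing R] (b : List X → Y) (P : List X → Prop)
    (hP : ∀ l l', l.Sublist l' → P l' → P l) (r : Y → Y → Prop)
    (hr : ∀ t t', t'.Sublist t → t' ≠ [] → P t → r (b t) (b t')) (k : ℕ) (t : List X) (ht : P t) :
    sub R b k (single t 1) ∈ On R (fun l => l.Pairwise r ∧
      ∀ y ∈ l, ∃ t', t'.Sublist t ∧ t' ≠ [] ∧ y = b t') := by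
  induction k generalizing t with
  | zero =>
    rw [sub_zero_single]
    split_ifs
    · exact single_mem_On (by simp) _
    · exact Submodule.zero_mem _
  | succ k ih =>
    rw [sub_succ_single]
    rcases eq_or_ne t [] with rfl | h0
    · simp
    refine cone_mem_On (P := fun l => l.Pairwise r ∧
      ∀ y ∈ l, ∃ t', t'.Sublist t ∧ t' ≠ [] ∧ y = b t') _ (fun l hl => ⟨?_, ?_⟩) ?_
    · refine map_On _ _ (fun l hl => ?_) (bd_single_mem t)
      refine On_mono (fun l' hl' => ⟨hl'.1, fun y hy => ?_⟩) (ih l (hP l t hl.2 ht))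
      obtain ⟨t', h1, h2, h3⟩ := hl'.2 y hy
      exact ⟨t', h1.trans hl.2, h2, h3⟩
    · rw [List.pairwise_cons]
      refine ⟨fun y hy => ?_, hl.1⟩
      obtain ⟨t', h1, h2, rfl⟩ := hl.2 y hy
      exact hr t t' h1 h2 ht
    · intro y hy
      rcases List.mem_cons.1 hy with rfl | hy
      · exact ⟨t, List.Sublist.refl t, h0, rfl⟩
      · exact hl.2 y hy

variable {R : Type*} [CommRing R] {E : Type*} [NormedAddCommGroup E] [NormedSpace ℝ E]

/-- The barycentre of a list of points (`0` for the empty list). -/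
noncomputable def bary (l : List E) : E := (l.length : ℝ)⁻¹ • l.sum

lemma bary_eq (l : List E) : bary l = ∑ i : Fin l.length, (l.length : ℝ)⁻¹ • l[i] := by
  rw [bary, ← Finset.smul_sum]
  congr 1
  exact (Fin.sum_univ_getElem l).symm

lemma sum_inv_length {l : List E} (hl : l ≠ []) :
    ∑ _i : Fin l.length, (l.length : ℝ)⁻¹ = 1 := by
  have : (l.length : ℝ) ≠ 0 := by simpa using hl
  simp [this]

lemma bary_mem {C : Set E} (hC : Convex ℝ C) {l : List E} (hl : l ≠ []) (h : ∀ v ∈ l, v ∈ C) :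
    bary l ∈ C := by
  rw [bary_eq]
  exact hC.sum_mem (fun _ _ => by positivity) (sum_inv_length hl)
    (fun i _ => h _ (List.getElem_mem _))

/-- The factor is `(N - 1) / N` for `N` vertices, because the vertex `v` itself contributes nothing to
the average of the distances. -/
lemma dist_bary_le {l : List E} {δ : ℝ} (h : ∀ v ∈ l, ∀ w ∈ l, dist v w ≤ δ) {D : ℕ}
    (hD : l.length ≤ D + 1) {v : E} (hv : v ∈ l) :
    dist v (bary l) ≤ (D / (D + 1) : ℝ) * δ := by
  have hl : l ≠ [] := List.ne_nil_of_mem hv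
  have hδ : 0 ≤ δ := dist_nonneg.trans (h v hv v hv)
  obtain ⟨m, hm, rfl⟩ := List.getElem_of_mem hv
  set N : ℝ := (l.length : ℝ) with hN
  have hpos : 0 < l.length := List.length_pos_iff.2 hl
  have hN0 : 0 < N := by rw [hN]; exact_mod_cast hpos
  have hND : N ≤ D + 1 := by rw [hN]; exact_mod_cast hD
  have e : l[m] - bary l = ∑ i : Fin l.length, N⁻¹ • (l[m] - l[i]) := by
    simp only [smul_sub, Finset.sum_sub_distrib]
    rw [bary_eq, ← Finset.sum_smul, sum_inv_length hl, one_smul]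
  rw [dist_eq_norm, e]
  calc ‖∑ i : Fin l.length, N⁻¹ • (l[m] - l[i])‖
      ≤ ∑ i : Fin l.length, ‖N⁻¹ • (l[m] - l[i])‖ := norm_sum_le _ _
    _ = ∑ i ∈ Finset.univ.erase (⟨m, hm⟩ : Fin l.length), ‖N⁻¹ • (l[m] - l[i])‖ := by
        rw [← Finset.add_sum_erase _ _ (Finset.mem_univ (⟨m, hm⟩ : Fin l.length))]
        simp
    _ ≤ ∑ i ∈ Finset.univ.erase (⟨m, hm⟩ : Fin l.length), N⁻¹ * δ := by
        refine Finset.sum_le_sum fun i _ => ?_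
        rw [norm_smul, Real.norm_of_nonneg (by positivity), ← dist_eq_norm]
        gcongr
        exact h _ (List.getElem_mem _) _ (List.getElem_mem _)
    _ = (N - 1) * N⁻¹ * δ := by
        rw [Finset.sum_const, Finset.card_erase_of_mem (Finset.mem_univ _), Finset.card_univ,
          Fintype.card_fin, nsmul_eq_mul, Nat.cast_sub hpos]
        push_cast; ring
    _ ≤ _ := by
        gcongr
        rw [← div_eq_mul_inv, div_le_div_iff₀ hN0 (by positivity)]
        nlinarith

lemma sub_bary_convex {C : Set E} (hC : Convex ℝ C) (k : ℕ) (t : List E) (h : ∀ v ∈ t, v ∈ C) :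
    sub R bary k (single t 1) ∈ On R (fun l : List E => ∀ v ∈ l, v ∈ C) := by
  have := sub_pairwise (R := R) (bary (E := E)) (fun t => ∀ v ∈ t, v ∈ C)
    (fun l l' hl hl' v hv => hl' v (hl.subset hv)) (fun _ _ => True) (by simp) k t h
  refine On_mono (fun l hl v hv => ?_) this
  obtain ⟨t', h1, h2, rfl⟩ := hl.2 v hv
  exact bary_mem hC h2 fun v hv => h v (h1.subset hv)

/-- Barycentric subdivision shrinks diameters by the factor `D / (D + 1)`. -/
lemma sub_bary_dist {δ : ℝ} (hδ : 0 ≤ δ) {D : ℕ} (k : ℕ) (t : List E)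
    (hD : t.length ≤ D + 1)
    (h : ∀ v ∈ t, ∀ w ∈ t, dist v w ≤ δ) :
    sub R bary k (single t 1) ∈
      On R (fun l : List E => ∀ v ∈ l, ∀ w ∈ l, dist v w ≤ (D / (D + 1) : ℝ) * δ) := by
  induction k generalizing t with
  | zero =>
    rw [sub_zero_single]
    split_ifs
    · exact single_mem_On (by simp) _
    · exact Submodule.zero_mem _
  | succ k ih =>
    rw [sub_succ_single]
    have h1 : sub R bary k (bd R (single t 1)) ∈
        On R (fun l : List E => ∀ v ∈ l, ∀ w ∈ l, dist v w ≤ (D / (D + 1) : ℝ) * δ) :=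
      map_On _ _ (fun l hl => ih l (by omega)
        (fun v hv w hw => h v (hl.2.subset hv) w (hl.2.subset hw))) (bd_single_mem t)
    have h2 : sub R bary k (bd R (single t 1)) ∈
        On R (fun l : List E => ∀ v ∈ l, v ∈ Metric.closedBall (bary t) ((D / (D + 1) : ℝ) * δ)) :=
      map_On _ _ (fun l hl => sub_bary_convex (convex_closedBall _ _) k l
        (fun v hv => dist_bary_le h hD (hl.2.subset hv))) (bd_single_mem t)
    refine cone_mem_On _ (fun l hl => ?_) (On_and h1 h2)
    intro v hv w hw
    rcases List.mem_cons.1 hv with rfl | hv <;> rcases List.mem_cons.1 hw with rfl | hw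
    · rw [dist_self]; positivity
    · rw [dist_comm]; exact hl.2 w hw
    · exact hl.2 v hv
    · exact hl.1 v hv w hw

lemma bary_map (f : E →ₗ[ℝ] E) (t : List E) : bary (t.map f) = f (bary t) := by
  simp [bary, map_list_sum]

/-- Lists lying in one of the sets `K c`, of diameter at most `δ`. -/
def Small {ι : Type*} (K : ι → Set E) (δ : ℝ) (l : List E) : Prop :=
  (∃ c, ∀ v ∈ l, v ∈ K c) ∧ ∀ v ∈ l, ∀ w ∈ l, dist v w ≤ δ

lemma Small.sublist {ι : Type*} {K : ι → Set E} {δ : ℝ} (l l' : List E) (h : l.Sublist l')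
    (h' : Small K δ l') : Small K δ l :=
  ⟨h'.1.imp fun _ hc v hv => hc v (h.subset hv),
    fun v hv w hw => h'.2 v (h.subset hv) w (h.subset hw)⟩

/-- Iterated barycentric subdivision stays in the cells `K c` and makes diameters arbitrarily small. -/
lemma sub_pow_small {ι : Type*} {K : ι → Set E} (hK : ∀ c, Convex ℝ (K c)) {D : ℕ} {δ : ℝ}
    (hδ : 0 ≤ δ) (k : ℕ) (hk : k ≤ D + 1) (M : ℕ) {z : Ch R E}
    (hz : z ∈ On R (fun l => l.length = k ∧ Small K δ l)) :
    ((sub R bary k : Module.End R (Ch R E)) ^ M) z ∈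
      On R (fun l => l.length = k ∧ Small K ((D / (D + 1) : ℝ) ^ M * δ) l) := by
  induction M with
  | zero => simpa using hz
  | succ M ih =>
    rw [pow_succ' (sub R bary k : Module.End R (Ch R E)), Module.End.mul_apply]
    refine map_On _ _ (fun t ht => ?_) ih
    obtain ⟨c, hc⟩ := ht.2.1
    have h1 := sub_bary_convex (R := R) (hK c) k t hc
    have h2 := sub_bary_dist (R := R) (by positivity) (D := D) k t (by omega) ht.2.2
    have h3 := sub_length (R := R) (bary (E := E)) k (single_mem_On (P := fun l => l.length = k) ht.1 1)
    refine On_mono (fun l hl => ⟨hl.1, ⟨c, hl.2.1⟩, ?_⟩) (On_and h3 (On_and h1 h2))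
    rw [pow_succ', mul_assoc]
    exact hl.2.2

lemma bd_sub_pow (k M : ℕ) (z : Ch R E) :
    bd R (((sub R bary (k + 1) : Module.End R (Ch R E)) ^ M) z) =
      ((sub R bary k : Module.End R (Ch R E)) ^ M) (bd R z) := by
  induction M with
  | zero => simp
  | succ M ih =>
    rw [pow_succ', Module.End.mul_apply, pow_succ', Module.End.mul_apply, bd_sub, ih]

lemma push_sub_pow (f : E →ₗ[ℝ] E) (k M : ℕ) (z : Ch R E) :
    ((sub R bary k : Module.End R (Ch R E)) ^ M) (push R f z) =
      push R f (((sub R bary k : Module.End R (Ch R E)) ^ M) z) := by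
  induction M with
  | zero => simp
  | succ M ih =>
    rw [pow_succ', Module.End.mul_apply, Module.End.mul_apply, ih]
    refine sub_push bary f f (fun _ => True) (by simp) (fun t _ _ => bary_map f t) k ?_
    rw [On]; simp

end Subdivision

/-! ### Orbits of prime size -/

section Phase

/-- For a map of prime period `p`, the points it moves lie in orbits of size exactly `p`, so a
position along the orbit can be chosen. -/
lemma exists_phase {X : Type*} (p : ℕ) [hp : Fact p.Prime] (g : X → X) (hg : g^[p] = id) :
    ∃ phase : X → ZMod p, ∀ x, g x ≠ x → phase (g x) = phase x + 1 := by
  have hmul : ∀ m, g^[p * m] = id := fun m => by rw [Function.iterate_mul, hg, Function.iterate_id]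
  let s : Setoid X :=
    { r := fun x y => ∃ m : ℕ, y = g^[m] x
      iseqv :=
        ⟨fun x => ⟨0, rfl⟩, by
          rintro x _ ⟨m, rfl⟩
          refine ⟨(p - 1) * m, ?_⟩
          rw [← Function.iterate_add_apply, ← Nat.succ_mul, Nat.succ_eq_add_one,
            Nat.sub_add_cancel hp.out.one_le, hmul, id], by
          rintro x _ _ ⟨m, rfl⟩ ⟨m', rfl⟩
          exact ⟨m' + m, (Function.iterate_add_apply _ _ _ _).symm⟩⟩ }
  have hout : ∀ x, ∃ m : ℕ, x = g^[m] (Quotient.mk s x).out := fun x =>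
    Quotient.exact (s := s) (Quotient.out_eq (Quotient.mk s x))
  choose m hm using hout
  refine ⟨fun x => m x, fun x hx => ?_⟩
  have hq : Quotient.mk s (g x) = Quotient.mk s x :=
    (Quotient.sound (s := s) ⟨1, rfl⟩ : Quotient.mk s x = Quotient.mk s (g x)).symm
  have h1 := hm (g x)
  have h2 := hm x
  rw [hq] at h1
  set r := (Quotient.mk s x).out with hr
  have hper : Function.IsPeriodicPt g p r := by
    change g^[p] r = r
    rw [hg]; rfl
  have hmin : Function.minimalPeriod g r = p := by
    rcases (Nat.dvd_prime hp.out).1 hper.minimalPeriod_dvd with h | h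
    · exfalso
      have hfix : g r = r := by
        have := Function.isPeriodicPt_minimalPeriod g r
        rw [h] at this
        exact this
      have : x = r := by rw [h2]; exact Function.iterate_fixed hfix _
      rw [this] at hx
      exact hx hfix
    · exact h
  have h3 : g^[m (g x)] r = g^[m x + 1] r := by
    rw [← h1, Function.iterate_succ_apply', ← h2]
  rw [← Function.iterate_mod_minimalPeriod_eq (n := m (g x)),
    ← Function.iterate_mod_minimalPeriod_eq (n := m x + 1),
    Function.iterate_eq_iterate_iff_of_lt_minimalPeriod
      (Nat.mod_lt _ (by rw [hmin]; exact hp.out.pos))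
      (Nat.mod_lt _ (by rw [hmin]; exact hp.out.pos)), hmin] at h3
  have := (ZMod.natCast_eq_natCast_iff' (m (g x)) (m x + 1) p).2 h3
  simpa using this

end Phase

/-! ### The join and its ladder -/

section Geometry

open Finsupp

variable {d p : ℕ} [hp : Fact p.Prime]

/-- The ambient space of the join of `d + 1` copies of `ZMod p`: the coordinate `w j a` is the length
of the `j`-th piece of `[0,1]` if its colour is `a`. It carries the supremum norm. -/
abbrev Sp (d p : ℕ) := Fin (d + 1) → ZMod p → ℝ

/-- Rotation of the colours. -/
def rot (d p : ℕ) : Sp d p →ₗ[ℝ] Sp d p where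
  toFun w j a := w j (a - 1)
  map_add' _ _ := rfl
  map_smul' _ _ := rfl

lemma rot_iterate (m : ℕ) (w : Sp d p) (j : Fin (d + 1)) (a : ZMod p) :
    ((rot d p)^[m] w) j a = w j (a - m) := by
  induction m generalizing a with
  | zero => simp
  | succ m ih =>
    rw [Function.iterate_succ_apply']
    change ((rot d p)^[m] w) j (a - 1) = _
    rw [ih]
    congr 1
    push_cast; ring

lemma rot_period : (rot d p)^[p] = id := by
  funext w j a
  rw [rot_iterate]; simp

/-- The top simplex of the join in which the `j`-th piece has colour `c j`. -/
def Kc (c : Fin (d + 1) → ZMod p) : Set (Sp d p) :=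
  {w | (∀ j a, 0 ≤ w j a) ∧ (∀ j a, a ≠ c j → w j a = 0) ∧ ∑ j, ∑ a, w j a = 1}

lemma Kc_convex (c : Fin (d + 1) → ZMod p) : Convex ℝ (Kc c) := by
  intro x hx y hy s t hs ht hst
  refine ⟨fun j a => ?_, fun j a h => ?_, ?_⟩
  · have := hx.1 j a
    have := hy.1 j a
    simp only [Pi.add_apply, Pi.smul_apply, smul_eq_mul]
    positivity
  · simp [hx.2.1 j a h, hy.2.1 j a h]
  · simp only [Pi.add_apply, Pi.smul_apply, smul_eq_mul, Finset.sum_add_distrib,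
      ← Finset.mul_sum, hx.2.2, hy.2.2]
    linarith

lemma Kc_le_one {c : Fin (d + 1) → ZMod p} {w : Sp d p} (hw : w ∈ Kc c) (j : Fin (d + 1))
    (a : ZMod p) : w j a ≤ 1 := by
  rw [← hw.2.2]
  refine le_trans ?_ (Finset.single_le_sum (f := fun j => ∑ a, w j a)
    (fun j _ => Finset.sum_nonneg fun a _ => hw.1 j a) (Finset.mem_univ j))
  exact Finset.single_le_sum (f := fun a => w j a) (fun a _ => hw.1 j a) (Finset.mem_univ a)

lemma Kc_compact (c : Fin (d + 1) → ZMod p) : IsCompact (Kc c) := by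
  have hb : Bornology.IsBounded (Kc c) := by
    refine (Metric.isBounded_closedBall (x := (0 : Sp d p)) (r := 1)).subset ?_
    intro w hw
    rw [mem_closedBall_zero_iff, pi_norm_le_iff_of_nonneg zero_le_one]
    intro j
    rw [pi_norm_le_iff_of_nonneg zero_le_one]
    intro a
    rw [Real.norm_of_nonneg (hw.1 j a)]
    exact Kc_le_one hw j a
  refine Metric.isCompact_of_isClosed_isBounded ?_ hb
  have : Kc c = (⋂ j, ⋂ a, {w : Sp d p | 0 ≤ w j a}) ∩
      ((⋂ j, ⋂ a, ⋂ _ : a ≠ c j, {w : Sp d p | w j a = 0}) ∩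
        {w : Sp d p | ∑ j, ∑ a, w j a = 1}) := by
    ext w; simp [Kc]
  rw [this]
  refine IsClosed.inter ?_ (IsClosed.inter ?_ ?_)
  · exact isClosed_iInter fun j => isClosed_iInter fun a =>
      isClosed_le continuous_const (by fun_prop)
  · exact isClosed_iInter fun j => isClosed_iInter fun a => isClosed_iInter fun _ =>
      isClosed_eq (by fun_prop) continuous_const
  · exact isClosed_eq (by fun_prop) continuous_const

lemma rot_mem_Kc {c : Fin (d + 1) → ZMod p} {w : Sp d p} (hw : w ∈ Kc c) :
    rot d p w ∈ Kc (fun j => c j + 1) := by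
  refine ⟨fun j a => hw.1 j _, fun j a h => hw.2.1 j _ fun e => h ?_, ?_⟩
  · exact sub_eq_iff_eq_add.1 e
  · rw [← hw.2.2]
    refine Finset.sum_congr rfl fun j _ => ?_
    exact Fintype.sum_equiv (Equiv.subRight (1 : ZMod p)) _ _ fun a => rfl

lemma dist_rot_le (v w : Sp d p) : dist (rot d p v) (rot d p w) ≤ dist v w := by
  rw [dist_pi_le_iff dist_nonneg]
  intro j
  rw [dist_pi_le_iff dist_nonneg]
  intro a
  exact (dist_le_pi_dist (v j) (w j) (a - 1)).trans (dist_le_pi_dist v w j)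

lemma small_rot {δ : ℝ} {l : List (Sp d p)} (h : Small Kc δ l) : Small Kc δ (l.map (rot d p)) := by
  obtain ⟨⟨c, hc⟩, hd⟩ := h
  refine ⟨⟨fun j => c j + 1, fun v hv => ?_⟩, fun v hv w hw => ?_⟩
  · obtain ⟨v, hv2, rfl⟩ := List.mem_map.1 hv
    exact rot_mem_Kc (hc v hv2)
  · obtain ⟨v, hv2, rfl⟩ := List.mem_map.1 hv
    obtain ⟨w, hw2, rfl⟩ := List.mem_map.1 hw
    exact (dist_rot_le v w).trans (hd v hv2 w hw2)

/-- The vertex of the join at which the `j`-th piece has colour `a` and is all of `[0,1]`. -/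
def ve (j : Fin (d + 1)) (a : ZMod p) : Sp d p := fun j' a' => if j' = j ∧ a' = a then 1 else 0

lemma rot_ve (j : Fin (d + 1)) (a : ZMod p) : rot d p (ve j a) = ve j (a + 1) := by
  funext j' a'
  change (if j' = j ∧ a' - 1 = a then (1 : ℝ) else 0) = if j' = j ∧ a' = a + 1 then 1 else 0
  simp only [sub_eq_iff_eq_add]

lemma ve_mem (c : Fin (d + 1) → ZMod p) (j : Fin (d + 1)) : ve j (c j) ∈ Kc c := by
  refine ⟨fun j' a => ?_, fun j' a h => ?_, ?_⟩
  · unfold ve; split_ifs <;> norm_num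
  · unfold ve
    rw [if_neg]
    rintro ⟨rfl, h2⟩
    exact h h2
  · simp [ve, ite_and]

/-- The ladder built on the vertices `ve k 0` lies in the join: its `k`-th chain only uses the first
`k` factors, with one colour for each. -/
lemma res_support (k : ℕ) (hk : k ≤ d + 1) :
    res (p := p) (rot d p) (fun k => ve (Fin.ofNat (d + 1) k) 0) k ∈ On (ZMod p)
      (fun l => l.length = k ∧ ∃ c : Fin (d + 1) → ZMod p,
        ∀ u ∈ l, ∃ j : Fin (d + 1), j.val < k ∧ u = ve j (c j)) := by
  induction k with
  | zero => exact single_mem_On (by simp) _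
  | succ k ih =>
    refine cone_mem_On _ ?_ (T_mem _ _ ?_ k (ih (by omega)))
    · rintro l ⟨hl, c, hc⟩
      refine ⟨by simp [hl], Function.update c (Fin.ofNat (d + 1) k) 0, ?_⟩
      have hv : (Fin.ofNat (d + 1) k).val = k := by
        simp [Fin.ofNat, Nat.mod_eq_of_lt (show k < d + 1 by omega)]
      intro u hu
      rcases List.mem_cons.1 hu with rfl | hu
      · exact ⟨Fin.ofNat (d + 1) k, by omega, by simp⟩
      · obtain ⟨j, hj, rfl⟩ := hc u hu
        refine ⟨j, by omega, ?_⟩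
        rw [Function.update_of_ne]
        rintro rfl
        omega
    · intro z hz
      refine map_On _ _ (fun l hl => ?_) hz
      rw [push_single]
      refine single_mem_On ?_ _
      obtain ⟨hl, c, hc⟩ := hl
      refine ⟨by simp [hl], fun j => c j + 1, fun u hu => ?_⟩
      obtain ⟨u, hu2, rfl⟩ := List.mem_map.1 hu
      obtain ⟨j, hj, rfl⟩ := hc u hu2
      exact ⟨j, hj, rot_ve _ _⟩

lemma res_small (k : ℕ) (hk : k ≤ d + 1) :
    res (p := p) (rot d p) (fun k => ve (Fin.ofNat (d + 1) k) 0) k ∈ On (ZMod p)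
      (fun l => l.length = k ∧ Small Kc 1 l) := by
  refine On_mono (fun l hl => ?_) (res_support k hk)
  obtain ⟨hl, c, hc⟩ := hl
  refine ⟨hl, ⟨c, fun u hu => ?_⟩, fun u hu w hw => ?_⟩
  · obtain ⟨j, -, rfl⟩ := hc u hu
    exact ve_mem c j
  · obtain ⟨j, -, rfl⟩ := hc u hu
    obtain ⟨j', -, rfl⟩ := hc w hw
    rw [dist_pi_le_iff zero_le_one]
    intro i
    rw [dist_pi_le_iff zero_le_one]
    intro a
    rw [Real.dist_eq]
    unfold ve
    split_ifs <;> norm_num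

lemma sub_bary_pow_nil {R E : Type*} [CommRing R] [NormedAddCommGroup E] [NormedSpace ℝ E] (M : ℕ) :
    ((sub R bary 0 : Module.End R (Ch R E)) ^ M) (single [] 1) = single [] 1 := by
  induction M with
  | zero => simp
  | succ M ih => rw [pow_succ, Module.End.mul_apply, sub_zero_single, if_pos List.length_nil, ih]

/-- With `d` levels available, a list of `d + 1` vertices along which the level never increases, and
stays the same only if the vertex does, repeats a vertex. -/
lemma dup_of_decreasing {l : List (Tgt p)} (hl : l.length = d + 1)
    (hr : l.Pairwise (fun y y' => y'.1 < y.1 ∨ y = y'))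
    (hs : ∀ y ∈ l, 1 ≤ y.1 ∧ y.1 ≤ d) : Dup l := by
  intro hc
  have h1 : l.IsChain (fun y y' => y'.1 < y.1) := by
    have hr1 := hr.isChain
    rw [List.isChain_iff_forall_rel_of_append_cons_cons] at hc hr1 ⊢
    intro a b l₁ l₂ e
    exact (hr1 e).resolve_right (hc e)
  have h2 : (l.map Prod.fst).IsChain (· > ·) := by
    rw [List.isChain_map]; exact h1
  have h3 : (l.map Prod.fst).Nodup := h2.pairwise.imp fun h => ne_of_gt h
  have h4 : (l.map Prod.fst).toFinset ⊆ Finset.Icc 1 d := by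
    intro m hm
    rw [List.mem_toFinset, List.mem_map] at hm
    obtain ⟨y, hy, rfl⟩ := hm
    exact Finset.mem_Icc.2 (hs y hy)
  have h5 := Finset.card_le_card h4
  rw [List.toFinset_card_of_nodup h3] at h5
  simp at h5
  omega

/-- There is no equivariant labelling of the small simplices of the join `(ZMod p)^{* (d + 1)}` that
takes values in only `d` levels and is monotone under inclusion of faces. -/
lemma core (b : List (Sp d p) → Tgt p) {δ : ℝ} (hδ : 0 < δ)
    (heq : ∀ t, t ≠ [] → Small Kc δ t → b (t.map (rot d p)) = sh 1 (b t))
    (hsize : ∀ t, t ≠ [] → Small Kc δ t → 1 ≤ (b t).1 ∧ (b t).1 ≤ d)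
    (hmono : ∀ t t', t'.Sublist t → t' ≠ [] → Small Kc δ t → (b t').1 < (b t).1 ∨ b t = b t') :
    False := by
  -- The ladder of the join is subdivided until its simplices have diameter at most `δ`; its image
  -- under `b` is a ladder in `Tgt p` whose last chain is degenerate.
  obtain ⟨M, hM⟩ : ∃ M : ℕ, ((d : ℝ) / (d + 1)) ^ M < δ :=
    exists_pow_lt_of_lt_one hδ ((div_lt_one (by positivity)).2 (by linarith))
  let v : ℕ → Sp d p := fun k => ve (Fin.ofNat (d + 1) k) 0
  let z : ℕ → Ch (ZMod p) (Sp d p) := fun k =>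
    ((sub (ZMod p) bary k : Module.End (ZMod p) (Ch (ZMod p) (Sp d p))) ^ M)
      (res (rot d p) v k)
  have hz : ∀ k ≤ d + 1, z k ∈ On (ZMod p) (fun l => l.length = k ∧ Small Kc δ l) := by
    intro k hk
    refine On_mono (fun l hl => ⟨hl.1, hl.2.1, fun u hu w hw => (hl.2.2 u hu w hw).trans ?_⟩)
      (sub_pow_small (D := d) Kc_convex zero_le_one k hk M (res_small k hk))
    linarith
  have hS : ∀ w ∈ On (ZMod p) (Small (Kc (d := d) (p := p)) δ),
      push (ZMod p) (rot d p) w ∈ On (ZMod p) (Small (Kc (d := d) (p := p)) δ) := by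
    intro w hw
    refine map_On _ _ (fun l hl => ?_) hw
    rw [push_single]
    exact single_mem_On (small_rot hl) _
  refine not_mem_dup (fun k => sub (ZMod p) b k (z k)) ?_ d ?_ ?_
  · change sub (ZMod p) b 0 (((sub (ZMod p) bary 0 :
      Module.End (ZMod p) (Ch (ZMod p) (Sp d p))) ^ M) (single [] 1)) = _
    rw [sub_bary_pow_nil, sub_zero_single, if_pos List.length_nil]
  · intro j hj
    rw [bd_sub, bd_sub_pow, bd_res _ rot_period,
      T_comm (rot d p) (rot d p) ⊤ (by simp) _ (fun w _ => push_sub_pow _ _ _ _) j (by simp)]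
    exact T_comm (rot d p) (sh 1) (On (ZMod p) (Small Kc δ)) hS _
      (fun w hw => sub_push b _ _ (Small Kc δ) Small.sublist heq j hw) j
      (On_mono (fun l hl => hl.2) (hz j (by omega)))
  · refine map_On _ _ (fun t ht => ?_) (hz (d + 1) le_rfl)
    have h1 := sub_pairwise (R := ZMod p) b (Small Kc δ) Small.sublist
      (fun y y' => y'.1 < y.1 ∨ y = y') hmono (d + 1) t ht.2
    have h2 := sub_length (R := ZMod p) b (d + 1)
      (single_mem_On (P := fun l => l.length = d + 1) ht.1 1)
    refine On_mono (fun l hl => dup_of_decreasing hl.1 hl.2.1 fun y hy => ?_) (On_and h2 h1)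
    obtain ⟨t', h3, h4, rfl⟩ := hl.2.2 y hy
    exact hsize t' h4 (Small.sublist _ _ h3 ht.2)

end Geometry

/-! ### Zeros of equivariant maps -/

section Labels

variable {n p : ℕ} [hp : Fact p.Prime]

/-- Rotation of the colour in a pair (measure, colour). -/
def shiftEquiv (n p : ℕ) : Fin n × ZMod p ≃ Fin n × ZMod p :=
  (Equiv.refl _).prodCongr (Equiv.addRight 1)

/-- Rotation of a set of pairs (measure, colour). -/
def shiftSet (A : Finset (Fin n × ZMod p)) : Finset (Fin n × ZMod p) :=
  A.map (shiftEquiv n p).toEmbedding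

lemma mem_shiftSet {A : Finset (Fin n × ZMod p)} {q : Fin n × ZMod p} :
    q ∈ shiftSet A ↔ (q.1, q.2 - 1) ∈ A := by
  obtain ⟨i, a⟩ := q
  rw [shiftSet, Finset.mem_map_equiv]
  simp [shiftEquiv, sub_eq_add_neg]

lemma mem_shiftSet_iterate (m : ℕ) (A : Finset (Fin n × ZMod p)) (q : Fin n × ZMod p) :
    q ∈ shiftSet^[m] A ↔ (q.1, q.2 - m) ∈ A := by
  induction m generalizing q with
  | zero => simp
  | succ m ih =>
    rw [Function.iterate_succ_apply', mem_shiftSet, ih]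
    have : q.2 - 1 - (m : ZMod p) = q.2 - ((m + 1 : ℕ) : ZMod p) := by push_cast; ring
    simp only [this]

lemma shiftSet_period : (shiftSet (n := n) (p := p))^[p] = id := by
  funext A
  ext q
  rw [mem_shiftSet_iterate]
  simp

lemma shiftSet_ne {A : Finset (Fin n × ZMod p)} (h0 : A.Nonempty)
    (h : ∀ i, ∃ a, (i, a) ∉ A) : shiftSet A ≠ A := by
  intro e
  obtain ⟨⟨i, a⟩, ha⟩ := h0
  obtain ⟨b, hb⟩ := h i
  apply hb
  rw [← Function.iterate_fixed e (b - a).val, mem_shiftSet_iterate]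
  simpa using ha

lemma card_le_of_missing {A : Finset (Fin n × ZMod p)} (h : ∀ i, ∃ a, (i, a) ∉ A) :
    A.card ≤ (p - 1) * n := by
  choose a ha using h
  have hinj : Function.Injective (fun i => (i, a i)) := fun i j h => (Prod.ext_iff.1 h).1
  have hdis : Disjoint A (Finset.univ.map ⟨_, hinj⟩) := by
    rw [Finset.disjoint_right]
    intro q hq
    obtain ⟨i, -, rfl⟩ := Finset.mem_map.1 hq
    exact ha i
  have h1 := Finset.card_le_univ (A.disjUnion _ hdis)
  rw [Finset.card_disjUnion] at h1
  simp [ZMod.card] at h1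
  have := hp.out.one_le
  rw [Nat.sub_mul, one_mul, mul_comm p n]
  omega

open Classical in
/-- The label set of a simplex: the positions at which `Φ` attains its maximal entry at some vertex. -/
noncomputable def labels {d : ℕ} (Φ : Sp d p → Fin n → ZMod p → ℝ) (t : List (Sp d p)) :
    Finset (Fin n × ZMod p) :=
  Finset.univ.filter fun q => ∃ v ∈ t, ∀ q' : Fin n × ZMod p, Φ v q'.1 q'.2 ≤ Φ v q.1 q.2

lemma mem_labels {d : ℕ} {Φ : Sp d p → Fin n → ZMod p → ℝ} {t : List (Sp d p)}
    {q : Fin n × ZMod p} : q ∈ labels Φ t ↔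
      ∃ v ∈ t, ∀ q' : Fin n × ZMod p, Φ v q'.1 q'.2 ≤ Φ v q.1 q.2 := by
  simp [labels]

lemma labels_rot {d : ℕ} {Φ : Sp d p → Fin n → ZMod p → ℝ}
    (hrot : ∀ w i a, Φ (rot d p w) i a = Φ w i (a - 1)) (t : List (Sp d p)) :
    labels Φ (t.map (rot d p)) = shiftSet (labels Φ t) := by
  ext q
  rw [mem_shiftSet, mem_labels, mem_labels]
  simp only [List.mem_map, exists_exists_and_eq_and, hrot]
  refine exists_congr fun v => and_congr_right fun _ => ⟨fun h q' => ?_, fun h q' => ?_⟩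
  · simpa using h (q'.1, q'.2 + 1)
  · exact h (q'.1, q'.2 - 1)

lemma labels_nonempty {d : ℕ} (hn : 0 < n) (Φ : Sp d p → Fin n → ZMod p → ℝ) {t : List (Sp d p)}
    (ht : t ≠ []) : (labels Φ t).Nonempty := by
  obtain ⟨v, hv⟩ := List.exists_mem_of_ne_nil t ht
  have : Nonempty (Fin n × ZMod p) := ⟨(⟨0, hn⟩, 0)⟩
  obtain ⟨q, hq⟩ := Finite.exists_max (fun q : Fin n × ZMod p => Φ v q.1 q.2)
  exact ⟨q, mem_labels.2 ⟨v, hv, hq⟩⟩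

/-- If the entries of `Φ` vary little on `t` and every row sums to zero, then no row lies entirely in
the label set: all entries of such a row would be nearly maximal, hence nearly zero, and so `Φ` would
be nearly zero. -/
lemma labels_missing {d : ℕ} {Φ : Sp d p → Fin n → ZMod p → ℝ} {t : List (Sp d p)} {ε : ℝ}
    (hε : 0 < ε)
    (hclose : ∀ u ∈ t, ∀ v ∈ t, dist (Φ u) (Φ v) ≤ ε / (4 * p))
    (hsum : ∀ u ∈ t, ∀ i, ∑ a, Φ u i a = 0) (hlarge : ∀ u ∈ t, ε ≤ ‖Φ u‖) (ht : t ≠ [])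
    (i : Fin n) : ∃ a, (i, a) ∉ labels Φ t := by
  by_contra! hall
  obtain ⟨u, hu⟩ := List.exists_mem_of_ne_nil t ht
  have hp1 : (1 : ℝ) ≤ p := by exact_mod_cast hp.out.one_le
  have hpp : (0 : ℝ) < p := by linarith
  set η := ε / (4 * p) with hη
  have hη0 : 0 < η := by positivity
  have hηε : 4 * p * η = ε := by rw [hη]; field_simp
  have hc : ∀ v ∈ t, ∀ j b, |Φ u j b - Φ v j b| ≤ η := by
    intro v hv j b
    rw [← Real.dist_eq]
    exact (dist_le_pi_dist (Φ u j) (Φ v j) b).trans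
      ((dist_le_pi_dist (Φ u) (Φ v) j).trans (hclose u hu v hv))
  have h1 : ∀ j b a, Φ u j b ≤ Φ u i a + 2 * η := by
    intro j b a
    obtain ⟨v, hv, hmax⟩ := mem_labels.1 (hall a)
    have e1 := abs_le.1 (hc v hv j b)
    have e2 := abs_le.1 (hc v hv i a)
    have e3 := hmax (j, b)
    simp only at e3
    linarith [e1.2, e2.1]
  have h2 : ∀ j b, Φ u j b ≤ 2 * η := by
    intro j b
    have := Finset.sum_le_sum fun a (_ : a ∈ (Finset.univ : Finset (ZMod p))) => h1 j b a
    rw [Finset.sum_add_distrib, hsum u hu i] at this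
    simp only [Finset.sum_const, Finset.card_univ, ZMod.card, nsmul_eq_mul, zero_add] at this
    exact le_of_mul_le_mul_left this hpp
  have h3 : ∀ j b, -(2 * p * η) ≤ Φ u j b := by
    intro j b
    have e := hsum u hu j
    rw [← Finset.add_sum_erase _ _ (Finset.mem_univ b)] at e
    have e2 : ∑ a ∈ Finset.univ.erase b, Φ u j a ≤ ∑ a ∈ Finset.univ.erase b, 2 * η :=
      Finset.sum_le_sum fun a _ => h2 j a
    have e3 : ∑ a ∈ Finset.univ.erase b, 2 * η ≤ ∑ _a : ZMod p, 2 * η :=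
      Finset.sum_le_sum_of_subset_of_nonneg (Finset.erase_subset _ _) fun _ _ _ => by positivity
    simp only [Finset.sum_const, Finset.card_univ, ZMod.card, nsmul_eq_mul] at e2 e3
    linarith
  have h4 : ‖Φ u‖ ≤ 2 * p * η := by
    rw [pi_norm_le_iff_of_nonneg (by positivity)]
    intro j
    rw [pi_norm_le_iff_of_nonneg (by positivity)]
    intro b
    rw [Real.norm_eq_abs, abs_le]
    refine ⟨h3 j b, (h2 j b).trans ?_⟩
    nlinarith
  have := hlarge u hu
  nlinarith

/-- A continuous equivariant map from the join of `(p - 1) n + 1` copies of `ZMod p` to the real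
`n × p` matrices with zero row sums has a zero. -/
theorem exists_zero {d : ℕ} (hd : d = (p - 1) * n) (hn : 0 < n)
    (Φ : Sp d p → Fin n → ZMod p → ℝ)
    (hcont : Continuous Φ)
    (hrot : ∀ w i a, Φ (rot _ p w) i a = Φ w i (a - 1))
    (hsum : ∀ c, ∀ w ∈ Kc c, ∀ i, ∑ a, Φ w i a = 0) :
    ∃ c, ∃ w ∈ Kc c, Φ w = 0 := by
  by_contra! hne
  let K : Set (Sp d p) := ⋃ c, Kc c
  have hK : IsCompact K := isCompact_iUnion fun c => Kc_compact c
  have hmem : ∀ {c w}, w ∈ Kc c → w ∈ K := fun h => Set.mem_iUnion.2 ⟨_, h⟩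
  obtain ⟨w₀, hw₀, hmin⟩ := hK.exists_isMinOn (f := fun w => ‖Φ w‖)
    ⟨_, hmem (ve_mem (fun _ => 0) 0)⟩ hcont.norm.continuousOn
  set ε := ‖Φ w₀‖ with hε
  have hε0 : 0 < ε := by
    obtain ⟨c, hc⟩ := Set.mem_iUnion.1 hw₀
    exact norm_pos_iff.2 (hne c w₀ hc)
  have hpp : (0 : ℝ) < p := by exact_mod_cast hp.out.pos
  -- The closeness `ε / (4 p)` is what `labels_missing` needs for a norm bounded below by `ε`.
  obtain ⟨δ, hδ, hunif⟩ := Metric.uniformContinuousOn_iff_le.1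
    (hK.uniformContinuousOn_of_continuous hcont.continuousOn) (ε / (4 * p)) (by positivity)
  have hmiss : ∀ t, t ≠ [] → Small Kc δ t → ∀ i, ∃ a, (i, a) ∉ labels Φ t := by
    intro t ht hs i
    obtain ⟨⟨c, hc⟩, hdist⟩ := hs
    exact labels_missing hε0
      (fun u hu v hv => hunif u (hmem (hc u hu)) v (hmem (hc v hv)) (hdist u hu v hv))
      (fun u hu => hsum c u (hc u hu)) (fun u hu => hmin (hmem (hc u hu))) ht i
  obtain ⟨phase, hphase⟩ := exists_phase p (shiftSet (n := n)) shiftSet_period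
  refine core (fun t => ((labels Φ t).card, phase (labels Φ t))) hδ ?_ ?_ ?_
  · intro t ht hs
    simp only [labels_rot hrot, sh]
    rw [hphase _ (shiftSet_ne (labels_nonempty hn Φ ht) (hmiss t ht hs))]
    simp [shiftSet]
  · intro t ht hs
    exact ⟨(labels_nonempty hn Φ ht).card_pos, (card_le_of_missing (hmiss t ht hs)).trans hd.ge⟩
  · intro t t' htt ht hs
    have hsub : labels Φ t' ⊆ labels Φ t := by
      intro q hq
      obtain ⟨v, hv, h⟩ := mem_labels.1 hq
      exact mem_labels.2 ⟨v, htt.subset hv, h⟩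
    rcases hsub.eq_or_ssubset with h | h
    · right; simp only [h]
    · left; exact Finset.card_lt_card h

end Labels

/-! ### The splitting theorem for a prime number of colours -/

section Necklace

variable {n d p : ℕ} [hp : Fact p.Prime]

/-- The left endpoint of the `k`-th piece (counted from `0`) of the partition encoded by `w`. -/
def cutPt (w : Sp d p) (k : ℕ) : ℝ :=
  ∑ j : Fin (d + 1), if j.val < k then ∑ a, w j a else 0

lemma cutPt_continuous (k : ℕ) : Continuous fun w : Sp d p => cutPt w k := by
  refine continuous_finsetSum _ fun j _ => ?_
  split_ifs
  · fun_prop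
  · exact continuous_const

lemma cutPt_zero (w : Sp d p) : cutPt w 0 = 0 := by simp [cutPt]

lemma cutPt_succ (w : Sp d p) (j : Fin (d + 1)) :
    cutPt w (j + 1) = cutPt w j + ∑ a, w j a := by
  have : ∑ a, w j a = ∑ j' : Fin (d + 1), if j' = j then ∑ a, w j' a else 0 := by simp
  rw [this, cutPt, cutPt, ← Finset.sum_add_distrib]
  refine Finset.sum_congr rfl fun j' _ => ?_
  rcases lt_trichotomy j'.val j.val with h | h | h
  · have : j' ≠ j := fun e => by simp [e] at h
    simp [h, this, Nat.lt_succ_of_lt h]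
  · have : j' = j := Fin.ext h
    simp [this]
  · have h1 : j' ≠ j := fun e => by simp [e] at h
    have h2 : ¬ j'.val < j.val + 1 := by omega
    have h3 : ¬ j'.val < j.val := by omega
    rw [if_neg h2, if_neg h3, if_neg h1, add_zero]

lemma cutPt_rot (w : Sp d p) (k : ℕ) : cutPt (rot d p w) k = cutPt w k := by
  refine Finset.sum_congr rfl fun j _ => ?_
  have : ∑ a, rot d p w j a = ∑ a, w j a :=
    Fintype.sum_equiv (Equiv.subRight (1 : ZMod p)) _ _ fun a => rfl
  rw [this]

lemma cutPt_mono {c : Fin (d + 1) → ZMod p} {w : Sp d p} (hw : w ∈ Kc c) :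
    Monotone (cutPt w) := by
  intro k k' h
  refine Finset.sum_le_sum fun j _ => ?_
  have h1 : 0 ≤ ∑ a, w j a := Finset.sum_nonneg fun a _ => hw.1 j a
  split_ifs
  · exact le_rfl
  · omega
  · exact h1
  · exact le_rfl

lemma cutPt_last {c : Fin (d + 1) → ZMod p} {w : Sp d p} (hw : w ∈ Kc c) :
    cutPt w (d + 1) = 1 := by
  rw [← hw.2.2, cutPt]
  exact Finset.sum_congr rfl fun j _ => if_pos j.isLt

/-- For distribution functions `F i`, the measure of the pieces of colour `a` minus `1 / p`. The pieces
of other colours have `w j a = 0`; this form makes continuity in `w` evident. -/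
noncomputable def excess (F : Fin n → ℝ → ℝ) (w : Sp d p) (i : Fin n) (a : ZMod p) : ℝ :=
  ∑ j : Fin (d + 1), (F i (cutPt w j + w j a) - F i (cutPt w j)) - 1 / p

lemma excess_eq {c : Fin (d + 1) → ZMod p} {w : Sp d p} (hw : w ∈ Kc c) (F : Fin n → ℝ → ℝ)
    (i : Fin n) (a : ZMod p) : excess F w i a =
      ∑ j : Fin (d + 1), (if c j = a then F i (cutPt w (j + 1)) - F i (cutPt w j) else 0)
        - 1 / p := by
  unfold excess
  congr 1
  refine Finset.sum_congr rfl fun j _ => ?_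
  split_ifs with h
  · subst h
    rw [cutPt_succ, Finset.sum_eq_single (c j) (fun b _ hb => hw.2.1 j b hb) (by simp)]
  · rw [hw.2.1 j a (Ne.symm h)]
    simp

lemma excess_sum {c : Fin (d + 1) → ZMod p} {w : Sp d p} (hw : w ∈ Kc c) (F : Fin n → ℝ → ℝ)
    (i : Fin n) (h0 : F i 0 = 0) (h1 : F i 1 = 1) : ∑ a, excess F w i a = 0 := by
  simp only [excess_eq hw, Finset.sum_sub_distrib]
  rw [Finset.sum_comm]
  simp only [Finset.sum_ite_eq, Finset.mem_univ, if_true]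
  rw [Fin.sum_univ_eq_sum_range (fun j => F i (cutPt w (j + 1)) - F i (cutPt w j)) (d + 1),
    Finset.sum_range_sub (fun j => F i (cutPt w j)), cutPt_last hw, cutPt_zero, h0, h1]
  have : (p : ℝ) ≠ 0 := by exact_mod_cast hp.out.ne_zero
  simp [ZMod.card, this]

/-- Splitting theorem for a prime number `p` of colours: `(p - 1) n` cuts suffice to divide `n`
continuous measures, given by their distribution functions, into `p` equal shares each. -/
theorem necklace (hd : d = (p - 1) * n) (hn : 0 < n) (F : Fin n → ℝ → ℝ)
    (hF : ∀ i, Continuous (F i)) (h0 : ∀ i, F i 0 = 0) (h1 : ∀ i, F i 1 = 1) :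
    ∃ (c : Fin (d + 1) → ZMod p) (t : ℕ → ℝ), Monotone t ∧ t 0 = 0 ∧ t (d + 1) = 1 ∧
      ∀ i a, ∑ j : Fin (d + 1), (if c j = a then F i (t (j + 1)) - F i (t j) else 0) = 1 / p := by
  obtain ⟨c, w, hw, hz⟩ := exists_zero hd hn (excess F)
    (by
      refine continuous_pi fun i => continuous_pi fun a => ?_
      refine Continuous.sub (continuous_finsetSum _ fun j _ => ?_) continuous_const
      exact ((hF i).comp ((cutPt_continuous _).add (by fun_prop))).sub
        ((hF i).comp (cutPt_continuous _)))
    (by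
      intro w i a
      simp only [excess, cutPt_rot]
      rfl)
    (fun c w hw i => excess_sum hw F i (h0 i) (h1 i))
  refine ⟨c, cutPt w, cutPt_mono hw, cutPt_zero w, cutPt_last hw, fun i a => ?_⟩
  have := congrFun (congrFun hz i) a
  rw [excess_eq hw] at this
  simpa [sub_eq_zero] using this

end Necklace

/-! ### Functions constant between cuts -/

section Cuts

open Set

variable {L L' : Type*}

/-- `Rep x l φ`: on `(x, 1]` the function `φ` is the step function described by `l`, a list of pairs
(right endpoint, value) from left to right. The number of cuts is `l.length - 1`. -/
def Rep : ℝ → List (ℝ × L) → (ℝ → L) → Prop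
  | x, [], _ => x = 1
  | x, (z, v) :: l, φ => x ≤ z ∧ (∀ u ∈ Ioc x z, φ u = v) ∧ Rep z l φ

lemma Rep.le_one {x : ℝ} {l : List (ℝ × L)} {φ : ℝ → L} (h : Rep x l φ) : x ≤ 1 := by
  induction l generalizing x with
  | nil => exact le_of_eq h
  | cons q l ih => exact h.1.trans (ih h.2.2)

lemma Rep.map (f : L → L') {x : ℝ} {l : List (ℝ × L)} {φ : ℝ → L} (h : Rep x l φ) :
    Rep x (l.map fun q => (q.1, f q.2)) (fun u => f (φ u)) := by
  induction l generalizing x with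
  | nil => exact h
  | cons q l ih => exact ⟨h.1, fun u hu => congrArg f (h.2.1 u hu), ih h.2.2⟩

lemma Rep.congr {x : ℝ} {l : List (ℝ × L)} {φ ψ : ℝ → L} (h : Rep x l φ)
    (e : ∀ u, x < u → φ u = ψ u) : Rep x l ψ := by
  induction l generalizing x with
  | nil => exact h
  | cons q l ih =>
    exact ⟨h.1, fun u hu => by rw [← e u hu.1, h.2.1 u hu],
      ih h.2.2 fun u hu => e u (h.1.trans_lt hu)⟩

/-- The number of changes of `f` along the values `s, v₁, v₂, ...`, where the `vᵢ` are the values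
in the list. -/
def chg (f : L → Bool) : L → List (ℝ × L) → ℕ
  | _, [] => 0
  | s, (_, v) :: l => (if f s = f v then 0 else 1) + chg f v l

/-- The cuts at which `f ∘ φ` does not change can be dropped. -/
lemma compress (f : L → Bool) {φ : ℝ → L} {x z : ℝ} {v : L} {l : List (ℝ × L)}
    (h : Rep x ((z, v) :: l) φ) :
    ∃ z' l', Rep x ((z', f v) :: l') (fun u => f (φ u)) ∧ l'.length = chg f v l := by
  induction l generalizing x z v with
  | nil => exact ⟨z, [], Rep.map f h, rfl⟩
  | cons q l ih =>
    obtain ⟨z2, v2⟩ := q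
    obtain ⟨hxz, hv, hr⟩ := h
    obtain ⟨z', l', ⟨h1, h2, h3⟩, hlen⟩ := ih hr
    by_cases hf : f v = f v2
    · refine ⟨z', l', ⟨hxz.trans h1, fun u hu => ?_, h3⟩, by simp [chg, hf, hlen]⟩
      rcases le_or_gt u z with h | h
      · exact congrArg f (hv u ⟨hu.1, h⟩)
      · exact (h2 u ⟨h, hu.2⟩).trans hf.symm
    · refine ⟨z, (z', f v2) :: l', ⟨hxz, fun u hu => congrArg f (hv u hu), h1, h2, h3⟩, ?_⟩
      simp [chg, hf, hlen, add_comm]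

/-- The indicator of the part with colour `a` of the original set. -/
def mark {C : Type*} [DecidableEq C] (a : C) (q : Bool × C) : Bool := q.1 && decide (q.2 = a)

/-- Superposition of a set and a colouring. A cut of the set changes the part of at most one colour
(the current one), a cut of the colouring the parts of at most two. -/
lemma merge {C : Type*} [DecidableEq C] [Fintype C] {φ : ℝ → Bool} {χ : ℝ → C} (N : ℕ)
    {x z z' : ℝ} {s : Bool} {c : C} {l : List (ℝ × Bool)} {l' : List (ℝ × C)}
    (hN : l.length + l'.length = N)
    (h : Rep x ((z, s) :: l) φ) (h' : Rep x ((z', c) :: l') χ) :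
    ∃ z'' l'', Rep x ((z'', (s, c)) :: l'') (fun u => (φ u, χ u)) ∧
      ∑ a, chg (mark a) (s, c) l'' ≤ l.length + 2 * l'.length := by
  induction N generalizing x z z' s c l l' with
  | zero =>
    obtain rfl : l = [] := List.length_eq_zero_iff.1 (by omega)
    obtain rfl : l' = [] := List.length_eq_zero_iff.1 (by omega)
    obtain ⟨h1, h2, h3⟩ := h
    obtain ⟨h1', h2', h3'⟩ := h'
    obtain rfl : z = 1 := h3
    obtain rfl : z' = 1 := h3'
    exact ⟨1, [], ⟨h1, fun u hu => Prod.ext (h2 u hu) (h2' u hu), rfl⟩, by simp [chg]⟩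
  | succ N ih =>
    obtain ⟨h1, h2, h3⟩ := h
    obtain ⟨h1', h2', h3'⟩ := h'
    -- The piece that ends first provides the next cut of the superposition.
    rcases le_or_gt z z' with hz | hz
    · rcases l with _ | ⟨⟨z2, s2⟩, l⟩
      · refine ⟨z, [], ⟨h1, fun u hu => ?_, h3⟩, by simp [chg]⟩
        exact Prod.ext (h2 u hu) (h2' u ⟨hu.1, hu.2.trans hz⟩)
      · obtain ⟨z'', l'', hr, hc⟩ := ih (l := l) (l' := l') (by simp at hN; omega) h3
          (show Rep z ((z', c) :: l') χ from
            ⟨hz, fun u hu => h2' u ⟨h1.trans_lt hu.1, hu.2⟩, h3'⟩)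
        refine ⟨z, (z'', (s2, c)) :: l'', ⟨h1, fun u hu => ?_, hr⟩, ?_⟩
        · exact Prod.ext (h2 u hu) (h2' u ⟨hu.1, hu.2.trans hz⟩)
        · have : ∑ a, (if mark a (s, c) = mark a (s2, c) then 0 else 1) ≤ 1 := by
            calc ∑ a, (if mark a (s, c) = mark a (s2, c) then 0 else 1)
                ≤ ∑ a, (if c = a then 1 else 0) := by
                  refine Finset.sum_le_sum fun a _ => ?_
                  by_cases ha : c = a <;> simp [mark, ha]
                  split_ifs <;> simp
              _ = 1 := by simp
          simp only [chg, Finset.sum_add_distrib, List.length_cons]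
          omega
    · rcases l' with _ | ⟨⟨z2, c2⟩, l'⟩
      · refine ⟨z', [], ⟨h1', fun u hu => ?_, h3'⟩, by simp [chg]⟩
        exact Prod.ext (h2 u ⟨hu.1, hu.2.trans hz.le⟩) (h2' u hu)
      · obtain ⟨z'', l'', hr, hc⟩ := ih (l := l) (l' := l') (by simp at hN; omega)
          (show Rep z' ((z, s) :: l) φ from
            ⟨hz.le, fun u hu => h2 u ⟨h1'.trans_lt hu.1, hu.2⟩, h3⟩) h3'
        refine ⟨z', (z'', (s, c2)) :: l'', ⟨h1', fun u hu => ?_, hr⟩, ?_⟩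
        · exact Prod.ext (h2 u ⟨hu.1, hu.2.trans hz.le⟩) (h2' u hu)
        · have : ∑ a, (if mark a (s, c) = mark a (s, c2) then 0 else 1) ≤ 2 := by
            calc ∑ a, (if mark a (s, c) = mark a (s, c2) then 0 else 1)
                ≤ ∑ a, ((if c = a then 1 else 0) + (if c2 = a then 1 else 0)) := by
                  refine Finset.sum_le_sum fun a _ => ?_
                  by_cases ha : c = a <;> by_cases hb : c2 = a <;> simp [mark, ha, hb]
                  all_goals split_ifs <;> simp
              _ = 2 := by simp [Finset.sum_add_distrib]
          simp only [chg, Finset.sum_add_distrib, List.length_cons]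
          omega

/-- The total increment of `G` over the pieces of `(x, 1]` on which the list `l` has value `a`. -/
def inc [DecidableEq L] (G : ℝ → ℝ) (a : L) : ℝ → List (ℝ × L) → ℝ
  | _, [] => 0
  | x, (z, v) :: l => (if v = a then G z - G x else 0) + inc G a z l

/-- A colouring of the pieces of a partition as a function on `[0,1]`. -/
lemma exists_rep [DecidableEq L] [Nonempty L] (N : ℕ) (c : Fin N → L) (t : ℕ → ℝ) (ht : Monotone t)
    (h1 : t N = 1) : ∃ (l : List (ℝ × L)) (χ : ℝ → L), Rep (t 0) l χ ∧ l.length = N ∧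
      ∀ G a, inc G a (t 0) l = ∑ j : Fin N, (if c j = a then G (t (j + 1)) - G (t j) else 0) := by
  induction N generalizing t with
  | zero => exact ⟨[], fun _ => Classical.arbitrary L, h1, rfl, by simp [inc]⟩
  | succ N ih =>
    obtain ⟨l, χ, hr, hl, hG⟩ := ih (fun j => c j.succ) (fun k => t (k + 1))
      (fun k k' h => ht (by omega)) h1
    refine ⟨(t 1, c 0) :: l, fun u => if u ≤ t 1 then c 0 else χ u,
      ⟨ht (by omega), fun u hu => if_pos hu.2, hr.congr fun u hu => ?_⟩, by simp [hl], ?_⟩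
    · rw [if_neg (not_le.2 hu)]
    · intro G a
      have := hG G a
      simp only [zero_add] at this
      rw [inc, this, Fin.sum_univ_succ]
      simp

lemma Rep.measurable {x : ℝ} {l : List (ℝ × L)} {φ : ℝ → L} (h : Rep x l φ) (a : L) :
    MeasurableSet {u ∈ Ioc x 1 | φ u = a} := by
  induction l generalizing x with
  | nil =>
    obtain rfl : x = 1 := h
    simp
  | cons q l ih =>
    obtain ⟨z, v⟩ := q
    obtain ⟨h1, h2, h3⟩ := h
    have : {u ∈ Ioc x 1 | φ u = a} = {u ∈ Ioc x z | v = a} ∪ {u ∈ Ioc z 1 | φ u = a} := by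
      ext u
      have hz1 := h3.le_one
      simp only [mem_ofPred_eq, mem_union, mem_Ioc]
      rcases le_or_gt u z with hu | hu
      · constructor
        · rintro ⟨⟨h4, h5⟩, h6⟩
          exact Or.inl ⟨⟨h4, hu⟩, by rw [← h2 u ⟨h4, hu⟩, h6]⟩
        · rintro (⟨⟨h4, h5⟩, h6⟩ | ⟨⟨h4, h5⟩, h6⟩)
          · exact ⟨⟨h4, h5.trans hz1⟩, by rw [h2 u ⟨h4, hu⟩, h6]⟩
          · linarith
      · constructor
        · rintro ⟨⟨h4, h5⟩, h6⟩
          exact Or.inr ⟨⟨hu, h5⟩, h6⟩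
        · rintro (⟨⟨h4, h5⟩, h6⟩ | ⟨⟨h4, h5⟩, h6⟩)
          · linarith
          · exact ⟨⟨h1.trans_lt hu, h5⟩, h6⟩
    rw [this]
    refine MeasurableSet.union ?_ (ih h3)
    by_cases hv : v = a
    · have : {u ∈ Ioc x z | v = a} = Ioc x z := by ext; simp [hv]
      rw [this]
      exact measurableSet_Ioc
    · simp [hv]

/-- If `G` is a distribution function of `ν`, then `inc G a` is the measure of the set with value `a`. -/
lemma Rep.inc_eq [DecidableEq L] (ν : Measure ℝ) [IsFiniteMeasure ν] (G : ℝ → ℝ)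
    (hG : ∀ x z, x ≤ z → G z - G x = ν.real (Ioc x z))
    {x : ℝ} {l : List (ℝ × L)} {φ : ℝ → L} (h : Rep x l φ) (a : L) :
    inc G a x l = ν.real {u ∈ Ioc x 1 | φ u = a} := by
  induction l generalizing x with
  | nil =>
    obtain rfl : x = 1 := h
    simp [inc]
  | cons q l ih =>
    obtain ⟨z, v⟩ := q
    obtain ⟨h1, h2, h3⟩ := h
    have hz1 := h3.le_one
    rw [inc, ih h3, hG x z h1]
    have hsplit : {u ∈ Ioc x 1 | φ u = a} =
        {u ∈ Ioc x z | φ u = a} ∪ {u ∈ Ioc z 1 | φ u = a} := by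
      rw [← Ioc_union_Ioc_eq_Ioc h1 hz1]
      ext u
      simp only [mem_ofPred_eq, mem_union]
      tauto
    have hdis : Disjoint {u ∈ Ioc x z | φ u = a} {u ∈ Ioc z 1 | φ u = a} := by
      rw [Set.disjoint_left]
      rintro u ⟨hu, -⟩ ⟨hu', -⟩
      exact absurd hu.2 (not_le.2 hu'.1)
    rw [hsplit, measureReal_union hdis (h3.measurable a)]
    congr 1
    by_cases hv : v = a
    · rw [if_pos hv]
      congr 1
      ext u
      exact ⟨fun hu => ⟨hu, by rw [h2 u hu, hv]⟩, fun hu => hu.1⟩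
    · rw [if_neg hv]
      have : {u ∈ Ioc x z | φ u = a} = ∅ := by
        ext u
        simp only [mem_ofPred_eq, mem_empty_iff_false, iff_false, not_and]
        intro hu
        rw [h2 u hu]
        exact hv
      rw [this, measureReal_empty]

/-- The half-open pieces of `Rep` can be replaced by closed ones, up to a finite set of points. -/
lemma Rep.toCuts {x : ℝ} (N : ℕ) {l : List (ℝ × Bool)} (hl : l.length = N) {φ : ℝ → Bool}
    (h : Rep x l φ) : ∃ (y : Fin (N + 1) → ℝ) (b : Fin N → Bool) (E : Set ℝ),
      (∀ i : Fin N, y i.castSucc ≤ y i.succ) ∧ y 0 = x ∧ y (Fin.last N) = 1 ∧ E.Finite ∧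
      ∀ u ∉ E, (∃ i, b i = true ∧ u ∈ Icc (y i.castSucc) (y i.succ)) ↔ u ∈ Ioc x 1 ∧ φ u = true := by
  induction N generalizing x l with
  | zero =>
    obtain rfl : l = [] := List.length_eq_zero_iff.1 hl
    obtain rfl : x = 1 := h
    exact ⟨fun _ => 1, fun i => i.elim0, ∅, fun i => i.elim0, rfl, rfl, finite_empty, by simp⟩
  | succ N ih =>
    rcases l with _ | ⟨⟨z, v⟩, l⟩
    · simp at hl
    obtain ⟨h1, h2, h3⟩ := h
    have hz1 := h3.le_one
    obtain ⟨y, b, E, hy, hy0, hy1, hE, hu⟩ := ih (by simpa using hl) h3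
    refine ⟨Fin.cons x y, Fin.cons v b, insert x E, fun i => ?_, rfl, ?_, hE.insert x, ?_⟩
    · refine Fin.cases ?_ (fun j => ?_) i
      · simpa [hy0] using h1
      · simpa [← Fin.succ_castSucc] using hy j
    · rw [← Fin.succ_last, Fin.cons_succ, hy1]
    · intro u hux
      rw [mem_insert_iff, not_or] at hux
      rw [Fin.exists_fin_succ]
      simp only [Fin.cons_zero, Fin.cons_succ, Fin.castSucc_zero, ← Fin.succ_castSucc, hy0]
      rw [hu u hux.2]
      simp only [mem_Icc, mem_Ioc]
      constructor
      · rintro (⟨h4, h5, h6⟩ | ⟨⟨h4, h5⟩, h6⟩)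
        · have h7 := lt_of_le_of_ne h5 (Ne.symm hux.1)
          exact ⟨⟨h7, h6.trans hz1⟩, by rw [h2 u ⟨h7, h6⟩, h4]⟩
        · exact ⟨⟨h1.trans_lt h4, h5⟩, h6⟩
      · rintro ⟨⟨h4, h5⟩, h6⟩
        rcases le_or_gt u z with h7 | h7
        · exact Or.inl ⟨by rw [← h2 u ⟨h4, h7⟩, h6], h4.le, h7⟩
        · exact Or.inr ⟨⟨h7, h5⟩, h6⟩

lemma Rep.achievable {m : ℕ} {l : List (ℝ × Bool)} (hl : l.length = m + 1) {φ : ℝ → Bool}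
    (h : Rep 0 l φ) : ∃ A, AchievableWithCuts m A ∧
      ∀ (μ : Measure ℝ) [NullSingletonClass μ], μ A = μ {u ∈ Ioc (0 : ℝ) 1 | φ u = true} := by
  obtain ⟨y, b, E, hy, hy0, hy1, hE, hu⟩ := h.toCuts (m + 1) hl
  refine ⟨_, ⟨y, Fin.monotone_iff_le_succ.2 hy, hy0, hy1,
    Finset.univ.filter (fun i => b i = true), rfl⟩, fun μ _ => ?_⟩
  refine measure_congr (Filter.eventuallyEq_set.2 ?_)
  have hE0 : ∀ᵐ u ∂μ, u ∉ E := by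
    rw [ae_iff]
    simpa using hE.measure_zero μ
  filter_upwards [hE0] with u hue
  rw [← hu u hue]
  simp only [mem_iUnion, Finset.mem_filter, Finset.mem_univ, true_and, exists_prop]

end Cuts

/-! ### Refinement and induction over Q* -/

section Refinement

open Set

/-- Pigeonhole: some value is at most the average. -/
lemma exists_mul_le_sum {C : Type*} [Fintype C] [Nonempty C] (f : C → ℕ) :
    ∃ a, Fintype.card C * f a ≤ ∑ b, f b := by
  obtain ⟨a, ha⟩ := Finite.exists_min f
  refine ⟨a, ?_⟩
  have := Finset.sum_le_sum fun b (_ : b ∈ (Finset.univ : Finset C)) => ha b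
  simpa using this

/-- From a set with `m` cuts and measure `α` under every `μ i`, a set of measure `α / p` with at most
`(m + 2 (p - 1) n) / p` cuts. -/
lemma refine_step {n p : ℕ} [hp : Fact p.Prime] (hn : 0 < n) (μ : Fin n → Measure ℝ)
    [∀ i, IsProbabilityMeasure (μ i)] [∀ i, NullSingletonClass (μ i)] {α : ℝ} (hα : 0 < α) {m : ℕ}
    {l : List (ℝ × Bool)} {φ : ℝ → Bool} (h : Rep 0 l φ) (hl : l.length = m + 1)
    (hμ : ∀ i, (μ i).real {u ∈ Ioc (0 : ℝ) 1 | φ u = true} = α) :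
    ∃ (m' : ℕ) (l' : List (ℝ × Bool)) (φ' : ℝ → Bool), Rep 0 l' φ' ∧ l'.length = m' + 1 ∧
      p * m' ≤ m + 2 * ((p - 1) * n) ∧
      ∀ i, (μ i).real {u ∈ Ioc (0 : ℝ) 1 | φ' u = true} = α / p := by
  set D := {u ∈ Ioc (0 : ℝ) 1 | φ u = true} with hD
  have hDm : MeasurableSet D := h.measurable true
  let ν : Fin n → Measure ℝ := fun i => (μ i).restrict D
  have hνD : ∀ i, (ν i).real (Ioc 0 1) = α := by
    intro i
    rw [measureReal_restrict_apply measurableSet_Ioc, ← hμ i]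
    congr 1
    exact inter_eq_right.2 fun u hu => hu.1
  -- `H i` is the distribution function of the restriction of `μ i` to the given set.
  let H : Fin n → ℝ → ℝ := fun i t => ∫ _ in (0 : ℝ)..t, (1 : ℝ) ∂(ν i)
  have hint : ∀ i a b, IntervalIntegrable (fun _ : ℝ => (1 : ℝ)) (ν i) a b := fun i a b =>
    intervalIntegrable_const
  have hHsub : ∀ i x z, x ≤ z → H i z - H i x = (ν i).real (Ioc x z) := by
    intro i x z hxz
    simp only [H]
    rw [intervalIntegral.integral_interval_sub_left (hint _ _ _) (hint _ _ _),
      intervalIntegral.integral_const', Ioc_eq_empty (not_lt.2 hxz)]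
    simp
  have hH0 : ∀ i, H i 0 = 0 := fun i => intervalIntegral.integral_same
  have hHc : ∀ i, Continuous (H i) := fun i => intervalIntegral.continuous_primitive (hint i) 0
  obtain ⟨c, t, htm, ht0, ht1, hsum⟩ := necklace (p := p) rfl hn (fun i t => H i t / α)
    (fun i => (hHc i).div_const α) (fun i => by simp [hH0])
    (fun i => by
      have := hHsub i 0 1 zero_le_one
      rw [hH0, sub_zero, hνD] at this
      rw [this, div_self hα.ne'])
  obtain ⟨l', χ, hr, hl', hinc⟩ := exists_rep _ c t htm ht1
  rw [ht0] at hr hinc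
  have hmeas : ∀ i a, (ν i).real {u ∈ Ioc (0 : ℝ) 1 | χ u = a} = α / p := by
    intro i a
    rw [← Rep.inc_eq (ν i) (H i) (hHsub i) hr a, hinc]
    have := hsum i a
    have e : ∀ j : Fin ((p - 1) * n + 1),
        (if c j = a then H i (t (j + 1)) - H i (t j) else 0) =
          α * (if c j = a then H i (t (j + 1)) / α - H i (t j) / α else 0) := by
      intro j
      split_ifs
      · field_simp
      · simp
    simp only [e]
    rw [← Finset.mul_sum, this]
    ring
  rcases l with _ | ⟨⟨z, s⟩, l⟩
  · simp at hl
  rcases l' with _ | ⟨⟨z', c'⟩, l'⟩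
  · simp at hl'
  obtain ⟨z'', l'', hr', hcost⟩ := merge _ rfl h hr
  obtain ⟨a, ha⟩ := exists_mul_le_sum fun a : ZMod p => chg (mark a) (s, c') l''
  obtain ⟨z₃, l₃, hr₃, hl₃⟩ := compress (mark a) hr'
  refine ⟨l₃.length, _, _, hr₃, rfl, ?_, fun i => ?_⟩
  · rw [ZMod.card, ← hl₃] at ha
    simp only [List.length_cons, Nat.add_right_cancel_iff] at hl hl'
    rw [hl, hl'] at hcost
    exact ha.trans hcost
  · rw [← hmeas i a, measureReal_restrict_apply (hr.measurable a)]
    congr 1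
    ext u
    simp only [mark, Bool.and_eq_true, decide_eq_true_eq, mem_ofPred_eq, mem_inter_iff, hD]
    tauto

lemma null_of_step {μ : Measure ℝ} (h : IsStepMeasure μ) : NullSingletonClass μ := by
  obtain ⟨-, k, a, b, c, -, rfl⟩ := h
  exact ⟨fun x => withDensity_absolutelyContinuous _ _ (measure_singleton x)⟩

lemma real_Ioc_of_step {μ : Measure ℝ} (h : IsStepMeasure μ) : μ.real (Ioc 0 1) = 1 := by
  have := h.1
  have := null_of_step h
  have hc : μ (Icc 0 1)ᶜ = 0 := by
    obtain ⟨-, k, a, b, c, hab, rfl⟩ := h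
    rw [withDensity_apply _ measurableSet_Icc.compl, setLIntegral_eq_zero_iff
      measurableSet_Icc.compl (Finset.measurable_sum _ fun i _ =>
        measurable_const.indicator measurableSet_Ico)]
    refine Filter.Eventually.of_forall fun x hx => Finset.sum_eq_zero fun i _ => ?_
    refine indicator_of_notMem (fun hi => hx ⟨(hab i).1.trans hi.1, hi.2.le.trans (hab i).2⟩) _
  have h1 : μ (Ioc 0 1) = 1 := by
    rw [measure_congr (Ioc_ae_eq_Icc (μ := μ) (a := (0 : ℝ)) (b := 1))]
    exact (prob_compl_eq_zero_iff measurableSet_Icc).1 hc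
  simp [measureReal_def, h1]

lemma den_div {q : ℚ} {p : ℕ} (hp : p.Prime) (h : ¬ (p : ℤ) ∣ q.num) :
    (q / (p : ℚ)).den = q.den * p := by
  have hcop : Nat.Coprime q.num.natAbs (q.den * p) := by
    refine Nat.Coprime.mul_right q.reduced ?_
    rw [Nat.coprime_comm, hp.coprime_iff_not_dvd, ← Int.natCast_dvd]
    exact h
  have e : q / (p : ℚ) = (q.num : ℚ) / ((q.den * p : ℕ) : ℤ) := by
    conv_lhs => rw [← Rat.num_div_den q]
    push_cast
    rw [div_div]
  rw [e]
  have hpos : (0 : ℤ) < ((q.den * p : ℕ) : ℤ) := by exact_mod_cast Nat.mul_pos q.den_pos hp.pos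
  exact_mod_cast Rat.den_div_eq_of_coprime hpos (by rwa [Int.natAbs_natCast])

lemma den_one_sub (q : ℚ) : (1 - q).den = q.den := by
  exact_mod_cast Rat.natCast_sub_den 1 q

lemma rep_const (v : Bool) : Rep 0 [(1, v)] (fun _ => v) :=
  ⟨zero_le_one, fun _ _ => rfl, rfl⟩

/-- The bound `m ≤ 2 (k - 1) n / k` for `k = α.den`, stated in `ℕ` without division or
subtraction. -/
theorem exists_rep_of_QStar {n : ℕ} (hn : 0 < n) (μ : Fin n → Measure ℝ)
    (hμ : ∀ i, IsStepMeasure (μ i)) {α : ℚ} (hα : QStar α) :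
    0 ≤ α ∧ ∃ (m : ℕ) (l : List (ℝ × Bool)) (φ : ℝ → Bool), Rep 0 l φ ∧ l.length = m + 1 ∧
      m * α.den + 2 * n ≤ 2 * α.den * n ∧
      ∀ i, (μ i).real {u ∈ Ioc (0 : ℝ) 1 | φ u = true} = α := by
  have : ∀ i, IsProbabilityMeasure (μ i) := fun i => (hμ i).1
  have : ∀ i, NullSingletonClass (μ i) := fun i => null_of_step (hμ i)
  have hdiv : ∀ (q : ℚ) (p : ℕ), p.Prime → ¬ (p : ℤ) ∣ q.num →
      (0 ≤ q ∧ ∃ (m : ℕ) (l : List (ℝ × Bool)) (φ : ℝ → Bool), Rep 0 l φ ∧ l.length = m + 1 ∧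
      m * q.den + 2 * n ≤ 2 * q.den * n ∧
      ∀ i, (μ i).real {u ∈ Ioc (0 : ℝ) 1 | φ u = true} = q) →
      (0 ≤ q / p ∧ ∃ (m : ℕ) (l : List (ℝ × Bool)) (φ : ℝ → Bool), Rep 0 l φ ∧ l.length = m + 1 ∧
      m * (q / (p : ℚ)).den + 2 * n ≤ 2 * (q / (p : ℚ)).den * n ∧
      ∀ i, (μ i).real {u ∈ Ioc (0 : ℝ) 1 | φ u = true} = (q / p : ℚ)) := by
    rintro q p hp hnd ⟨hq0, m, l, φ, hr, hl, hb, hm⟩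
    have : Fact p.Prime := ⟨hp⟩
    -- The value `0` is excluded because every prime divides its numerator.
    have hq : (0 : ℝ) < q := by
      have : q ≠ 0 := by rintro rfl; simp at hnd
      exact_mod_cast lt_of_le_of_ne hq0 this.symm
    obtain ⟨m', l', φ', hr', hl', hb', hm'⟩ := refine_step (p := p) hn μ hq hr hl hm
    refine ⟨by positivity, m', l', φ', hr', hl', ?_, fun i => by rw [hm' i]; push_cast; rfl⟩
    rw [den_div hp hnd]
    obtain ⟨r, rfl⟩ : ∃ r, p = r + 1 := ⟨p - 1, by have := hp.pos; omega⟩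
    simp only [Nat.add_sub_cancel] at hb'
    nlinarith
  have hneg : ∀ (q : ℚ), (0 ≤ q ∧ ∃ (m : ℕ) (l : List (ℝ × Bool)) (φ : ℝ → Bool),
      Rep 0 l φ ∧ l.length = m + 1 ∧ m * q.den + 2 * n ≤ 2 * q.den * n ∧
      ∀ i, (μ i).real {u ∈ Ioc (0 : ℝ) 1 | φ u = true} = q) →
      (0 ≤ 1 - q ∧ ∃ (m : ℕ) (l : List (ℝ × Bool)) (φ : ℝ → Bool), Rep 0 l φ ∧ l.length = m + 1 ∧
      m * (1 - q).den + 2 * n ≤ 2 * (1 - q).den * n ∧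
      ∀ i, (μ i).real {u ∈ Ioc (0 : ℝ) 1 | φ u = true} = (1 - q : ℚ)) := by
    rintro q ⟨hq0, m, l, φ, hr, hl, hb, hm⟩
    have hle : q ≤ 1 := by
      have := hm ⟨0, hn⟩
      have h2 : (q : ℝ) ≤ 1 := by rw [← this]; exact measureReal_le_one
      exact_mod_cast h2
    refine ⟨by linarith, m, _, _, hr.map (fun b => !b), by simpa using hl, ?_, fun i => ?_⟩
    · rw [den_one_sub]; exact hb
    · have e : {u ∈ Ioc (0 : ℝ) 1 | (!φ u) = true} =
          Ioc 0 1 \ {u ∈ Ioc (0 : ℝ) 1 | φ u = true} := by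
        ext u
        simp only [mem_ofPred_eq, mem_sdiff, Bool.not_eq_true']
        cases φ u <;> simp
      rw [e, measureReal_sdiff (fun u hu => hu.1) (hr.measurable true), hm i, real_Ioc_of_step (hμ i)]
      push_cast; rfl
  induction hα with
  | zero => exact ⟨le_rfl, 0, _, _, rep_const false, rfl, by simp, fun i => by simp⟩
  | one =>
    refine ⟨zero_le_one, 0, _, _, rep_const true, rfl, by simp, fun i => ?_⟩
    have : {u ∈ Ioc (0 : ℝ) 1 | true = true} = Ioc 0 1 := by ext; simp
    rw [this, real_Ioc_of_step (hμ i)]; simp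
  | div q p hp _ hnd ih => exact hdiv q p hp hnd ih
  | one_sub_div q p hp _ hnd ih => exact hneg _ (hdiv q p hp hnd ih)

end Refinement

end ICD

/-- If `α = l/k ∈ Q*` (lowest terms, `k ≥ 1`, `0 ≤ l ≤ k`), then for
every `n ≥ 1` and all step-function probability measures `μ_1, ..., μ_n` on `[0,1]`,
a set achievable with at most `2(k−1)n/k` cuts exists on which every measure takes
value exactly `α`. -/
theorem icd_upper_bound_QStar
    (α : ℚ) (hQ : QStar α) (h0 : 0 ≤ α) (h1 : α ≤ 1)
    (n : ℕ) (hn : 0 < n)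
    (μ : Fin n → Measure ℝ) (hμ : ∀ i, IsStepMeasure (μ i)) :
    ∃ (m : ℕ) (A : Set ℝ),
      (m : ℝ) ≤ 2 * ((α.den : ℝ) - 1) * (n : ℝ) / (α.den : ℝ) ∧
      AchievableWithCuts m A ∧
      ∀ i, μ i A = ENNReal.ofReal (α : ℝ) := by
  obtain ⟨-, m, l, φ, hr, hl, hb, hm⟩ := ICD.exists_rep_of_QStar hn μ hμ hQ
  obtain ⟨A, hA, hAμ⟩ := hr.achievable hl
  refine ⟨m, A, ?_, hA, fun i => ?_⟩
  · rw [le_div_iff₀ (by exact_mod_cast α.den_pos)]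
    have : (m : ℝ) * α.den + 2 * n ≤ 2 * α.den * n := by exact_mod_cast hb
    linarith
  · have := (hμ i).1
    have := ICD.null_of_step (hμ i)
    rw [hAμ (μ i), ← hm i, ofReal_measureReal]
end

section
/- Let p be a prime and let l be an integer with 1 ≤ l ≤ p − 1. If the rational l/p belongs to Q*, then l = 1 or l = p − 1. -/
theorem QStar.mem_Icc {q : ℚ} (h : QStar q) : 0 ≤ q ∧ q ≤ 1 := by
  have key : ∀ (q : ℚ) (r : ℕ), r.Prime → 0 ≤ q ∧ q ≤ 1 → 0 ≤ q / r ∧ q / r ≤ 1 := by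
    intro q r hr ⟨h0, h1⟩
    have hr1 : (1 : ℚ) ≤ r := by exact_mod_cast hr.one_le
    exact ⟨by positivity, div_le_one_of_le₀ (h1.trans hr1) (by positivity)⟩
  induction h with
  | zero => norm_num
  | one => norm_num
  | div q r hr _ _ ih => exact key q r hr ih
  | one_sub_div q r hr _ _ ih =>
    obtain ⟨h0, h1⟩ := key q r hr ih
    constructor <;> linarith

/-- The only fraction with prime denominator `p` and positive numerator that arises as an admissible
quotient `q / r` with `q ∈ Q*` is `1 / p`. -/
theorem QStar.num_eq_one_of_div_eq {q : ℚ} {r p : ℕ} {m : ℤ} (hq : QStar q) (hr : r.Prime)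
    (hp : p.Prime) (hnd : ¬ (r : ℤ) ∣ q.num) (hm : 1 ≤ m)
    (h : (m : ℚ) / p = q / r) : m = 1 := by
  have hr0 : (r : ℚ) ≠ 0 := by exact_mod_cast hr.ne_zero
  have hp0 : (p : ℚ) ≠ 0 := by exact_mod_cast hp.ne_zero
  rw [div_eq_div_iff hp0 hr0] at h
  have hrp : r = p := by
    have hz : q.num * p = r * (m * q.den) := by
      have hd : (q.den : ℚ) ≠ 0 := by exact_mod_cast q.den_ne_zero
      have hn : (q.num : ℚ) = q * q.den := (Rat.mul_den_eq_num q).symm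
      have : (q.num : ℚ) * p = r * (m * q.den) := by
        rw [hn]
        linear_combination -(q.den : ℚ) * h
      exact_mod_cast this
    have hdvd : (r : ℤ) ∣ p :=
      ((Nat.prime_iff_prime_int.mp hr).dvd_or_dvd ⟨_, hz⟩).resolve_left hnd
    exact (Nat.prime_dvd_prime_iff_eq hr hp).mp (by exact_mod_cast hdvd)
  subst hrp
  have hmq : (m : ℚ) = q := mul_right_cancel₀ hr0 h
  have hm1 : (m : ℚ) ≤ 1 := hmq ▸ hq.mem_Icc.2
  have : m ≤ 1 := by exact_mod_cast hm1
  omega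

/-- If `p` is prime, `1 ≤ l ≤ p − 1`, and `l/p ∈ Q*`, then `l = 1` or
`l = p − 1`. -/
theorem QStar_prime_denominator
    (p : ℕ) (hp : p.Prime) (l : ℕ) (hl : 1 ≤ l) (hlp : l ≤ p - 1)
    (h : QStar ((l : ℚ) / (p : ℚ))) :
    l = 1 ∨ l = p - 1 := by
  have hp0 : (p : ℚ) ≠ 0 := by exact_mod_cast hp.ne_zero
  have hlt : l < p := by have := hp.pos; omega
  generalize hx : (l : ℚ) / (p : ℚ) = x at h
  cases h with
  | zero =>
    have : (l : ℚ) ≠ 0 := by exact_mod_cast (by omega : l ≠ 0)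
    exact absurd hx (div_ne_zero this hp0)
  | one =>
    rw [div_eq_one_iff_eq hp0] at hx
    have : l = p := by exact_mod_cast hx
    omega
  | div q r hr hq hnd =>
    left
    have := hq.num_eq_one_of_div_eq (m := (l : ℤ)) hr hp hnd (by omega) (by simpa using hx)
    omega
  | one_sub_div q r hr hq hnd =>
    right
    have hx' : (((p : ℤ) - l : ℤ) : ℚ) / p = q / r := by
      push_cast
      rw [sub_div, div_self hp0, hx]
      ring
    have := hq.num_eq_one_of_div_eq hr hp hnd (by omega) hx'
    omega
end

section
/- For every integer k ≥ 1, both 1/k and (k−1)/k belong to Q*. -/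
/-- For every integer `k ≥ 1`, both `1/k` and `(k−1)/k` belong
to `Q*`. -/
theorem QStar_one_div_and_compl (k : ℕ) (hk : 1 ≤ k) :
    QStar (1 / (k : ℚ)) ∧ QStar (((k : ℚ) - 1) / (k : ℚ)) := by
  -- Peel off one prime factor at a time: `1/m` has numerator `1`, which no prime divides,
  -- so both closure rules apply to it and give `1/(p·m)` and `1 - 1/(p·m)`.
  induction k using induction_on_primes with
  | zero => omega
  | one => exact ⟨by simpa using QStar.one, by simpa using QStar.zero⟩
  | prime_mul p m hp ih =>
    have hm : 0 < m := Nat.pos_of_mul_pos_left hk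
    have hnd : ¬ (p : ℤ) ∣ (1 / (m : ℚ)).num := by
      rw [one_div, Rat.inv_natCast_num_of_pos hm]
      exact_mod_cast hp.not_dvd_one
    have hm0 : (m : ℚ) ≠ 0 := by exact_mod_cast hm.ne'
    have hp0 : (p : ℚ) ≠ 0 := by exact_mod_cast hp.ne_zero
    refine ⟨?_, ?_⟩
    · convert QStar.div _ p hp (ih hm).1 hnd using 1
      push_cast
      field_simp
    · convert QStar.one_sub_div _ p hp (ih hm).1 hnd using 1
      push_cast
      field_simp
end

section
/- Define f : ℚ → ℚ as follows: for a rational α ∈ (0,1) written in lowest terms as l/k (with 1 ≤ l < k), set f(α) = (k mod l)/k; set f(α) = α for all other rationals. Then for every rational α ∈ (0,1) with reduced numerator l, there exists a natural number j ≤ l such that the j-th iterate f^[j](α) belongs to Q*. -/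
/-- The recursion map of Case 2 of the upper-bound proof: for `α ∈ (0,1)` written in
lowest terms as `l/k`, `f(α) = (k mod l)/k`; all other rationals are fixed. -/
def caseTwoStep (α : ℚ) : ℚ :=
  if 0 < α ∧ α < 1 then (((α.den : ℤ) % α.num : ℤ) : ℚ) / (α.den : ℚ) else α

/-- One step of the recursion from a rational in `(0,1)` stays in `[0,1)` and strictly
decreases the reduced numerator: cancellation only shrinks `k mod l`, which is less than `l`. -/
lemma caseTwoStep_descends (α : ℚ) (h0 : 0 < α) (h1 : α < 1) :
    0 ≤ caseTwoStep α ∧ caseTwoStep α < 1 ∧ (caseTwoStep α).num < α.num := by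
  have hl : 0 < α.num := Rat.num_pos.mpr h0
  have hk : (0 : ℚ) < α.den := by exact_mod_cast α.den_pos
  have hr0 : 0 ≤ (α.den : ℤ) % α.num := Int.emod_nonneg _ hl.ne'
  have hrl : (α.den : ℤ) % α.num < α.num := Int.emod_lt_of_pos _ hl
  have hlk : α.num < (α.den : ℤ) := Rat.num_lt_denom_iff.mpr h1
  have hf : caseTwoStep α = (((α.den : ℤ) % α.num : ℤ) : ℚ) / (α.den : ℚ) := by
    simp [caseTwoStep, h0, h1]
  rw [hf]
  generalize (α.den : ℤ) % α.num = r at hr0 hrl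
  refine ⟨div_nonneg (by exact_mod_cast hr0) hk.le, ?_, ?_⟩
  · rw [div_lt_one hk]
    exact_mod_cast hrl.trans hlk
  · rcases hr0.eq_or_lt with rfl | hr
    · simpa using hl
    · have hd : ((r : ℚ) / (α.den : ℚ)).num ∣ r := by
        have := Rat.num_dvd r (b := (α.den : ℤ)) (by exact_mod_cast α.den_ne_zero)
        rwa [Rat.divInt_eq_div, Int.cast_natCast] at this
      exact (Int.le_of_dvd hr hd).trans_lt hrl

lemma caseTwoStep_reaches_zero (n : ℕ) :
    ∀ α : ℚ, 0 ≤ α → α < 1 → α.num ≤ n →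
      ∃ j : ℕ, (j : ℤ) ≤ α.num ∧ caseTwoStep^[j] α = 0 := by
  induction n with
  | zero =>
    intro α h0 _ hn
    have hnum : 0 ≤ α.num := Rat.num_nonneg.mpr h0
    exact ⟨0, by simpa using h0, Rat.num_eq_zero.mp (le_antisymm (by simpa using hn) hnum)⟩
  | succ n ih =>
    intro α h0 h1 hn
    rcases h0.eq_or_lt with rfl | h0
    · exact ⟨0, by simp, rfl⟩
    · obtain ⟨g0, g1, hlt⟩ := caseTwoStep_descends α h0 h1
      obtain ⟨j, hj, hz⟩ := ih _ g0 g1 (by push_cast at hn; omega)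
      exact ⟨j + 1, by push_cast; omega, by rwa [Function.iterate_succ_apply]⟩

/-- For every rational `α ∈ (0,1)` with reduced numerator `l`, some
iterate `f^[j](α)` with `j ≤ l` belongs to `Q*`. -/
theorem caseTwoStep_reaches_QStar
    (α : ℚ) (h0 : 0 < α) (h1 : α < 1) :
    ∃ j : ℕ, (j : ℤ) ≤ α.num ∧ QStar (caseTwoStep^[j] α) := by
  obtain ⟨j, hj, hz⟩ := caseTwoStep_reaches_zero α.num.toNat α h0.le h1 (Int.self_le_toNat _)
  exact ⟨j, hj, hz ▸ QStar.zero⟩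
end
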